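/- Let s ≥ 3 and n = 6·2^s − 3, and write e = 2^{s+1}. Consider the weight vectors ω_1 = (3,3,...,3,1,1) (s threes followed by two ones) and ω_2 = (3,3,...,3) (s+1 threes), both of degree n. Then: (i) the subspace of GL_4(F_2)-invariants of the weight subquotient (Q_n)^{ω_1} is trivial; (ii) the subspace of GL_4(F_2)-invariants of (Q_n)^{ω_2} is one-dimensional, spanned by the class of the polynomial ζ* = x_2^{e−1}x_3^{e−1}x_4^{e−1} + x_1^{e−1}x_3^{e−1}x_4^{e−1} + x_1^{e−1}x_2^{e−1}x_4^{e−1} + x_1^{e−1}x_2^{e−1}x_3^{e−1} + x_1x_2^{e−2}x_3^{e−1}x_4^{e−1} + x_1x_2^{e−1}x_3^{e−2}x_4^{e−1} + x_1x_2^{e−1}x_3^{e−1}x_4^{e−2} + x_1^{e−1}x_2x_3^{e−2}x_4^{e−1} + x_1^{e−1}x_2x_3^{e−1}x_4^{e−2} + x_1^{e−1}x_2^{e−1}x_3x_4^{e−2} + x_1^3x_2^{e−3}x_3^{e−2}x_4^{e−1} + x_1^3x_2^{e−3}x_3^{e−1}x_4^{e−2} + x_1^3x_2^{e−1}x_3^{e−3}x_4^{e−2}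 + x_1^{e−1}x_2^3x_3^{e−3}x_4^{e−2} + x_1^7x_2^{e−5}x_3^{e−3}x_4^{e−2}. -/

import Mathlib

/-!
Common setup: the polynomial algebra `P_4 = F_2[x_1,x_2,x_3,x_4]` (variables `X 0, ..., X 3`),
the Steenrod action, hit polynomials, the cohit spaces `Q_n`, and the (induced) actions of
`GL_4(F_2)` and of the symmetric group `Σ_4` on `Q_n`.
-/

open MvPolynomial

noncomputable section

abbrev kk : Type := ZMod 2
abbrev P4 : Type := MvPolynomial (Fin 4) kk

/-- The total Steenrod square: the algebra endomorphism of `P4` with `X i ↦ X i + (X i)^2`.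
For `g` homogeneous of degree `d`, `Sq^t g` is the degree-`d+t` homogeneous component
of `sqTotal g`. -/
def sqTotal : P4 →ₐ[kk] P4 := aeval fun i => X i + X i ^ 2

/-- The homogeneous polynomials of degree `n`, i.e. `(P_4)_n`, as a submodule. -/
def homog (n : ℕ) : Submodule kk P4 := homogeneousSubmodule (Fin 4) kk n

/-- The subspace `H_n` of hit polynomials of degree `n`: it is spanned by the elements
`Sq^{n-d}(g) = (sqTotal g)_n` for `g` homogeneous of degree `d < n`, i.e. by all
`∑_{t>0} Sq^t(f_t)` with `f_t ∈ (P_4)_{n-t}`. -/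
def hitSub (n : ℕ) : Submodule kk P4 :=
  Submodule.span kk
    {p | ∃ d, d < n ∧ ∃ g ∈ homog d, p = homogeneousComponent n (sqTotal g)}

/-- The cohit space `Q_n = (P_4)_n / H_n`. -/
abbrev Qn (n : ℕ) :=
  ↥(homog n) ⧸ ((hitSub n).comap (homog n).subtype)

/-- Projection of a polynomial onto its degree-`n` part, landing in `homog n`. -/
def toHomog (n : ℕ) : P4 →ₗ[kk] homog n :=
  (homogeneousComponent n).codRestrict (homog n) fun f => homogeneousComponent_mem n f

/-- The class in `Q_n` of (the degree-`n` component of) a polynomial.  For `f`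
homogeneous of degree `n` this is the class `[f]` of `f`. -/
def Qmk (n : ℕ) : P4 →ₗ[kk] Qn n :=
  ((hitSub n).comap (homog n).subtype).mkQ.comp (toHomog n)

/-- Substitution action of a matrix `M`: the algebra endomorphism `X i ↦ ∑ j M i j • X j`. -/
def substM (M : Matrix (Fin 4) (Fin 4) kk) : P4 →ₐ[kk] P4 :=
  aeval fun i => ∑ j, M i j • X j

/-- The set of invertible `4 × 4` matrices over `F_2`, i.e. `GL_4(F_2)`. -/
def glSet : Set (Matrix (Fin 4) (Fin 4) kk) := {M | IsUnit M}

/-- The set of permutation matrices, i.e. `Σ_4 ⊆ GL_4(F_2)`. -/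
def permSet : Set (Matrix (Fin 4) (Fin 4) kk) :=
  {M | ∃ σ : Equiv.Perm (Fin 4), M = σ.toPEquiv.toMatrix}

/-- Homogeneous polynomials of degree `n` whose class in `Q_n` is invariant under every
element of `G` (the action on classes being induced by `substM`): for every `M ∈ G`,
`M·f - f` is hit. -/
def invPre (n : ℕ) (G : Set (Matrix (Fin 4) (Fin 4) kk)) : Submodule kk P4 :=
  homog n ⊓ ⨅ M ∈ G, (hitSub n).comap ((substM M).toLinearMap - LinearMap.id)

/-- The subspace `(Q_n)^G` of `G`-invariant classes in `Q_n`. -/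
def QInv (n : ℕ) (G : Set (Matrix (Fin 4) (Fin 4) kk)) : Submodule kk (Qn n) :=
  (invPre n G).map (Qmk n)

/-- The `Σ_4`-submodule of `Q_n` generated by the classes of the polynomials in `S`:
the span of the classes of all the permuted polynomials `σ · f`, `σ ∈ Σ_4`, `f ∈ S`. -/
def permSpan (n : ℕ) (S : Set P4) : Submodule kk (Qn n) :=
  Submodule.span kk
    {c | ∃ σ : Equiv.Perm (Fin 4), ∃ f ∈ S, c = Qmk n (rename (⇑σ) f)}

/-- The weight vector of an exponent vector `d`: `wv d j = ∑ i (j-th binary digit of d i)`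
(indexed from `j = 0`, so `wv d (j-1)` is `ω_j(x^d)` in the literature). -/
def wv (d : Fin 4 →₀ ℕ) (j : ℕ) : ℕ := ∑ i, d i / 2 ^ j % 2

/-- Strict left-lexicographic order on weight vectors. -/
def wLt (a b : ℕ → ℕ) : Prop := ∃ j, (∀ i, i < j → a i = b i) ∧ a j < b j

/-- Left-lexicographic order on weight vectors. -/
def wLe (a b : ℕ → ℕ) : Prop := a = b ∨ wLt a b

/-- `(P_4)_n^{ω}`: the span of the degree-`n` monomials of weight `≤ ω`. -/
def Pw (n : ℕ) (w : ℕ → ℕ) : Submodule kk P4 :=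
  Submodule.span kk
    {f | ∃ d : Fin 4 →₀ ℕ, (∑ i, d i) = n ∧ wLe (wv d) w ∧ f = monomial d 1}

/-- `(P_4)_n^{<ω}`: the span of the degree-`n` monomials of weight `< ω`. -/
def PwLt (n : ℕ) (w : ℕ → ℕ) : Submodule kk P4 :=
  Submodule.span kk
    {f | ∃ d : Fin 4 →₀ ℕ, (∑ i, d i) = n ∧ wLt (wv d) w ∧ f = monomial d 1}

/-- The denominator `(H_n ∩ (P_4)_n^{ω}) + (P_4)_n^{<ω}` of the weight subquotient. -/
def wDenom (n : ℕ) (w : ℕ → ℕ) : Submodule kk P4 :=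
  (hitSub n ⊓ Pw n w) ⊔ PwLt n w

/-- The weight subquotient `(Q_n)^{ω} = (P_4)_n^{ω} / ((H_n ∩ (P_4)_n^{ω}) + (P_4)_n^{<ω})`. -/
abbrev Qw (n : ℕ) (w : ℕ → ℕ) :=
  ↥(Pw n w) ⧸ ((wDenom n w).comap (Pw n w).subtype)

/-- The class `[f]_ω` in `(Q_n)^ω` of an element of `(P_4)_n^{ω}`. -/
def QwMk (n : ℕ) (w : ℕ → ℕ) : Pw n w →ₗ[kk] Qw n w :=
  ((wDenom n w).comap (Pw n w).subtype).mkQ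

/-- The subspace of `G`-invariant classes of `(Q_n)^{ω}` (the action being induced by
`substM`): the image of the subspace of those `f ∈ (P_4)_n^{ω}` with `M·f ≡_ω f`
for all `M ∈ G`. -/
def QwInv (n : ℕ) (w : ℕ → ℕ) (G : Set (Matrix (Fin 4) (Fin 4) kk)) :
    Submodule kk (Qw n w) :=
  Submodule.map (QwMk n w)
    (Submodule.comap (Pw n w).subtype
      (⨅ M ∈ G, (wDenom n w).comap ((substM M).toLinearMap - LinearMap.id)))

/-- The image in `(Q_n)^{ω}` of the span of a set `S ⊆ (P_4)_n^{ω}` of polynomials. -/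
def QwSpanOf (n : ℕ) (w : ℕ → ℕ) (S : Set P4) : Submodule kk (Qw n w) :=
  Submodule.map (QwMk n w) (Submodule.comap (Pw n w).subtype (Submodule.span kk S))

/-- The polynomial `ζ*` (with `e = 2^{s+1}` and `x_i = X (i-1)`). -/
def zetaStar (e : ℕ) : P4 :=
  X 1 ^ (e - 1) * X 2 ^ (e - 1) * X 3 ^ (e - 1) +
    X 0 ^ (e - 1) * X 2 ^ (e - 1) * X 3 ^ (e - 1) +
    X 0 ^ (e - 1) * X 1 ^ (e - 1) * X 3 ^ (e - 1) +
    X 0 ^ (e - 1) * X 1 ^ (e - 1) * X 2 ^ (e - 1) +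
    X 0 * X 1 ^ (e - 2) * X 2 ^ (e - 1) * X 3 ^ (e - 1) +
    X 0 * X 1 ^ (e - 1) * X 2 ^ (e - 2) * X 3 ^ (e - 1) +
    X 0 * X 1 ^ (e - 1) * X 2 ^ (e - 1) * X 3 ^ (e - 2) +
    X 0 ^ (e - 1) * X 1 * X 2 ^ (e - 2) * X 3 ^ (e - 1) +
    X 0 ^ (e - 1) * X 1 * X 2 ^ (e - 1) * X 3 ^ (e - 2) +
    X 0 ^ (e - 1) * X 1 ^ (e - 1) * X 2 * X 3 ^ (e - 2) +
    X 0 ^ 3 * X 1 ^ (e - 3) * X 2 ^ (e - 2) * X 3 ^ (e - 1) +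
    X 0 ^ 3 * X 1 ^ (e - 3) * X 2 ^ (e - 1) * X 3 ^ (e - 2) +
    X 0 ^ 3 * X 1 ^ (e - 1) * X 2 ^ (e - 3) * X 3 ^ (e - 2) +
    X 0 ^ (e - 1) * X 1 ^ 3 * X 2 ^ (e - 3) * X 3 ^ (e - 2) +
    X 0 ^ 7 * X 1 ^ (e - 5) * X 2 ^ (e - 3) * X 3 ^ (e - 2)

/-!
Work modulo hit polynomials and monomials of lower weight. There the composite of operators
`f ↦ (∏_{k ≠ i} x_k) f²` along a word in the indices `i` depends only on the length of the word and
on its set of letters. The coefficient of a spike after substituting an invertible matrix `M`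
vanishes on hits, and along such a word it is the product of the corresponding entries in row `0` of
the adjugate of `M`; hence by Möbius inversion modulo 2 these coefficients determine the class.
An invariant class has a single value for all of them. For `ω₂` they are all `1` on `ζ*`, so that
`ζ*` spans the invariants. For `ω₁`, seven of them, attached to the nonzero vectors of a hyperplane
of `F_2⁴`, sum to zero, so their common value is `0`.
-/

namespace HitProblem

section Squares

variable {σ : Type*}

theorem coeff_two_nsmul_sq (f : MvPolynomial σ kk) (d : σ →₀ ℕ) :
    coeff (2 • d) (f ^ 2) = coeff d f := by
  rw [← expand_zmod, coeff_expand_smul 2 two_ne_zero]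

theorem exists_eq_two_nsmul_of_coeff_sq_ne_zero {f : MvPolynomial σ kk} {d : σ →₀ ℕ}
    (h : coeff d (f ^ 2) ≠ 0) : ∃ d', d = 2 • d' := by
  have dvd : ∀ i, 2 ∣ d i := fun i => by
    by_contra hi
    exact h (by rw [← expand_zmod, coeff_expand_of_not_dvd f hi])
  refine ⟨d.mapRange (· / 2) rfl, Finsupp.ext fun i => ?_⟩
  simp [Nat.mul_div_cancel' (dvd i)]

theorem eq_of_degree_le_of_add_two_nsmul_eq [Finite σ] {ε x d y : σ →₀ ℕ} (hε : ∀ i, ε i ≤ 1)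
    (hx : x.degree ≤ ε.degree) (h : ε + 2 • d = x + 2 • y) : ε = x ∧ d = y := by
  have le : ε ≤ x := fun i => by
    have := DFunLike.congr_fun h i
    simp only [Finsupp.add_apply, Finsupp.smul_apply, smul_eq_mul] at this
    have := hε i
    omega
  obtain ⟨z, rfl⟩ := exists_add_of_le le
  have hz : z = 0 := by
    rw [map_add] at hx
    exact (Finsupp.degree_eq_zero_iff z).1 (by omega)
  subst hz
  rw [add_zero] at h ⊢
  exact ⟨rfl, nsmul_right_injective two_ne_zero (add_left_cancel h)⟩

theorem coeff_add_two_nsmul_mul_sq [Finite σ] {f : MvPolynomial σ kk} {r : ℕ}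
    (hf : f.IsHomogeneous r) {ε : σ →₀ ℕ} (hε : ∀ i, ε i ≤ 1) (hr : r ≤ ε.degree)
    (g : MvPolynomial σ kk) (d : σ →₀ ℕ) :
    coeff (ε + 2 • d) (f * g ^ 2) = coeff ε f * coeff d g := by
  classical
  rw [coeff_mul, Finset.sum_eq_single (ε, 2 • d), coeff_two_nsmul_sq]
  · rintro ⟨x, y⟩ hxy hne
    replace hxy := Finset.HasAntidiagonal.mem_antidiagonal.1 hxy
    by_contra h
    obtain ⟨y', rfl⟩ := exists_eq_two_nsmul_of_coeff_sq_ne_zero (right_ne_zero_of_mul h)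
    have hx : x.degree = r := by_contra fun hne => left_ne_zero_of_mul h (hf.coeff_eq_zero hne)
    obtain ⟨rfl, rfl⟩ := eq_of_degree_le_of_add_two_nsmul_eq hε (hx.trans_le hr) hxy.symm
    exact hne rfl
  · simp

theorem support_mul_sq {f g : MvPolynomial σ kk} {x : σ →₀ ℕ} (h : x ∈ (f * g ^ 2).support) :
    ∃ y ∈ f.support, ∃ z ∈ g.support, x = y + 2 • z := by
  classical
  obtain ⟨y, hy, z, hz, rfl⟩ := Finset.mem_add.1 (support_mul _ _ h)
  obtain ⟨z, rfl⟩ := exists_eq_two_nsmul_of_coeff_sq_ne_zero (mem_support_iff.1 hz)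
  exact ⟨y, hy, z, by rwa [mem_support_iff, coeff_two_nsmul_sq, ← mem_support_iff] at hz, rfl⟩

end Squares

section Weights

/-- The weight vector `(3, w₁, w₂, …)` of `x_i x_j x_k f²` for distinct `i`, `j`, `k`, where `f` has
weight vector `(w₁, w₂, …)`. -/
def consThree (w : ℕ → ℕ) : ℕ → ℕ
  | 0 => 3
  | j + 1 => w j

theorem consThree_iterate_apply (w : ℕ → ℕ) (k j : ℕ) :
    consThree^[k] w j = if j < k then 3 else w (j - k) := by
  induction k generalizing j with
  | zero => simp
  | succ k ih =>
    rw [Function.iterate_succ_apply']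
    cases j with
    | zero => simp [consThree]
    | succ j => simp [consThree, ih]

theorem consThree_wLt_consThree {v w : ℕ → ℕ} : wLt (consThree v) (consThree w) ↔ wLt v w := by
  constructor
  · rintro ⟨_ | j, h, hj⟩
    · exact absurd hj (lt_irrefl 3)
    · exact ⟨j, fun i hi => h (i + 1) (by omega), hj⟩
  · rintro ⟨j, h, hj⟩
    refine ⟨j + 1, fun i hi => ?_, hj⟩
    rcases i with _ | i
    · rfl
    · exact h i (by omega)

theorem wLt_consThree_of_lt {v : ℕ → ℕ} (h : v 0 < 3) (w : ℕ → ℕ) : wLt v (consThree w) :=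
  ⟨0, fun _ hi => absurd hi (Nat.not_lt_zero _), h⟩

theorem apply_zero_le_of_wLt {v w : ℕ → ℕ} (h : wLt v w) : v 0 ≤ w 0 := by
  obtain ⟨j, agree, hj⟩ := h
  rcases j.eq_zero_or_pos with rfl | hpos
  · exact hj.le
  · exact (agree 0 hpos).le

theorem wv_zero (d : Fin 4 →₀ ℕ) : wv d 0 = ∑ i, d i % 2 := by simp [wv]

theorem wv_zero_add_two_nsmul (d d' : Fin 4 →₀ ℕ) : wv (d + 2 • d') 0 = wv d 0 := by
  simp [wv_zero]

theorem wv_zero_le_degree (d : Fin 4 →₀ ℕ) : wv d 0 ≤ d.degree := by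
  rw [wv_zero, Finsupp.degree_eq_sum]
  exact Finset.sum_le_sum fun i _ => Nat.mod_le _ _

/-- The exponent vector of `∏_{k ≠ i} x_k`. -/
def omitExp (i : Fin 4) : Fin 4 →₀ ℕ :=
  Finsupp.equivFunOnFinite.symm fun k => if k = i then 0 else 1

/-- The exponent vector of `(∏_{k ≠ i} x_k) f²` when `f` is the monomial with exponent vector
`d`. -/
def upExp (i : Fin 4) (d : Fin 4 →₀ ℕ) : Fin 4 →₀ ℕ := omitExp i + 2 • d

theorem omitExp_apply (i k : Fin 4) : omitExp i k = if k = i then 0 else 1 := rfl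

theorem upExp_apply (i : Fin 4) (d : Fin 4 →₀ ℕ) (k : Fin 4) :
    upExp i d k = (if k = i then 0 else 1) + 2 * d k := rfl

theorem degree_omitExp (i : Fin 4) : (omitExp i).degree = 3 := by
  revert i
  simp only [Finsupp.degree_eq_sum, omitExp_apply]
  decide

theorem wv_upExp (i : Fin 4) (d : Fin 4 →₀ ℕ) : wv (upExp i d) = consThree (wv d) := by
  funext j
  rcases j with _ | j
  · rw [upExp, wv_zero_add_two_nsmul, consThree, ← degree_omitExp i, Finsupp.degree_eq_sum, wv_zero]
    refine Finset.sum_congr rfl fun k _ => ?_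
    rw [omitExp_apply]
    split_ifs <;> rfl
  · change ∑ k, upExp i d k / 2 ^ (j + 1) % 2 = ∑ k, d k / 2 ^ j % 2
    refine Finset.sum_congr rfl fun k _ => ?_
    have half : upExp i d k / 2 = d k := by
      rw [upExp_apply]
      split_ifs <;> omega
    rw [pow_succ', ← Nat.div_div_eq_div_mul, half]

theorem exists_eq_upExp {d : Fin 4 →₀ ℕ} (h : wv d 0 = 3) : ∃ i d', d = upExp i d' := by
  have one_even : ∃ i, ∀ k, d k % 2 = if k = i then 0 else 1 := by
    have key : ∀ p : Fin 4 → Fin 2, ∑ i, (p i : ℕ) = 3 →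
        ∃ i, ∀ k, (p k : ℕ) = if k = i then 0 else 1 := by decide
    exact key (fun i => ⟨d i % 2, Nat.mod_lt _ two_pos⟩) (by rw [← h, wv_zero])
  obtain ⟨i, hi⟩ := one_even
  refine ⟨i, d.mapRange (· / 2) rfl, Finsupp.ext fun k => ?_⟩
  rw [upExp_apply, ← hi k, Finsupp.mapRange_apply, Nat.mod_add_div]

theorem exists_eq_upExp_of_wv_eq {d : Fin 4 →₀ ℕ} {w : ℕ → ℕ} (h : wv d = consThree w) :
    ∃ i d', d = upExp i d' ∧ wv d' = w := by
  obtain ⟨i, d', rfl⟩ := exists_eq_upExp (congrFun h 0)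
  rw [wv_upExp] at h
  exact ⟨i, d', rfl, funext fun j => congrFun h (j + 1)⟩

end Weights

section MonomialBasis

variable {σ R : Type*} [CommSemiring R]

theorem homogeneousComponent_mem_restrictSupport {s : Set (σ →₀ ℕ)} {f : MvPolynomial σ R}
    (hf : f ∈ restrictSupport R s) (n : ℕ) :
    homogeneousComponent n f ∈ restrictSupport R s := by
  rw [mem_restrictSupport_iff] at hf ⊢
  refine subset_trans (fun d hd => ?_) hf
  rw [Finset.mem_coe, support_homogeneousComponent] at hd
  exact (Finset.mem_filter.1 hd).1

theorem restrictSupport_le {s : Set (σ →₀ ℕ)} {V : Submodule R (MvPolynomial σ R)}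
    (h : ∀ d ∈ s, monomial d 1 ∈ V) : restrictSupport R s ≤ V := by
  rw [restrictSupport_eq_span, Submodule.span_le, Set.image_subset_iff]
  exact h

theorem linearMap_ext {V : Type*} [AddCommMonoid V] [Module R V]
    {φ ψ : MvPolynomial σ R →ₗ[R] V} (h : ∀ d, φ (monomial d 1) = ψ (monomial d 1)) : φ = ψ :=
  (basisMonomials σ R).ext fun d => by simpa using h d

theorem homogeneousComponent_monomial (n : ℕ) (d : σ →₀ ℕ) :
    homogeneousComponent n (monomial d (1 : R)) = if d.degree = n then monomial d 1 else 0 := by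
  simp only [homogeneousComponent_of_mem (isHomogeneous_monomial (1 : R) rfl), eq_comm]

theorem homogeneousComponent_eq_zero_of_mem_pow_idealOfVars {f : MvPolynomial σ R} {m n : ℕ}
    (hf : f ∈ idealOfVars σ R ^ m) (h : n < m) : homogeneousComponent n f = 0 := by
  ext d
  rw [coeff_homogeneousComponent, coeff_zero, ite_eq_right_iff]
  rintro rfl
  exact (mem_pow_idealOfVars_iff' m f).1 hf d h

theorem mem_pow_idealOfVars_of_isHomogeneous {f : MvPolynomial σ R} {n : ℕ}
    (hf : f.IsHomogeneous n) : f ∈ idealOfVars σ R ^ n :=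
  (mem_pow_idealOfVars_iff' n f).2 fun _ h => hf.coeff_eq_zero h.ne

end MonomialBasis

section Hits

/-- The space of all hit polynomials, homogeneous or not. Working without fixing the degree removes
all degree bookkeeping; the degree is recovered by taking homogeneous components. -/
def hits : Submodule kk P4 := ⨆ n, hitSub n

/-- The span of the monomials of weight less than `w`, in all degrees. -/
def lower (w : ℕ → ℕ) : Submodule kk P4 := restrictSupport kk {d | wLt (wv d) w}

/-- The degree-free version of the denominator of the weight subquotient: polynomials that are hit
up to monomials of weight less than `w`. -/
def hitsOrLower (w : ℕ → ℕ) : Submodule kk P4 := hits ⊔ lower w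

theorem homogeneousComponent_sqTotal_mem_hits {f : P4} {m n : ℕ} (hf : f.IsHomogeneous m)
    (h : m < n) : homogeneousComponent n (sqTotal f) ∈ hits :=
  Submodule.mem_iSup_of_mem n (Submodule.subset_span ⟨m, h, f, hf, rfl⟩)

theorem homogeneousComponent_mem_hitSub {f : P4} (hf : f ∈ hits) (n : ℕ) :
    homogeneousComponent n f ∈ hitSub n := by
  suffices h : hits ≤ (hitSub n).comap (homogeneousComponent n) from h hf
  refine iSup_le fun m => Submodule.span_le.2 ?_
  rintro _ ⟨d, hd, g, hg, rfl⟩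
  rw [SetLike.mem_coe, Submodule.mem_comap,
    homogeneousComponent_of_mem (homogeneousComponent_mem m _)]
  split_ifs with h
  · subst h
    exact Submodule.subset_span ⟨d, hd, g, hg, rfl⟩
  · exact zero_mem _

theorem monomial_mem_lower {d : Fin 4 →₀ ℕ} {w : ℕ → ℕ} (h : wLt (wv d) w) :
    monomial d 1 ∈ lower w :=
  (monomial_mem_restrictSupport kk).2 (.inl h)

theorem mul_sq_mem_lower {f : P4} {r : ℕ} (hf : f.IsHomogeneous r) (hr : r < 3) (g : P4)
    (w : ℕ → ℕ) : f * g ^ 2 ∈ lower (consThree w) := by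
  rw [lower, mem_restrictSupport_iff]
  intro d hd
  obtain ⟨y, hy, z, -, rfl⟩ := support_mul_sq hd
  have degree_y : y.degree = r := by_contra fun h => mem_support_iff.1 hy (hf.coeff_eq_zero h)
  refine wLt_consThree_of_lt ?_ w
  rw [wv_zero_add_two_nsmul]
  exact (wv_zero_le_degree y).trans_lt (degree_y.trans_lt hr)

end Hits

section Up

/-- The product of the three variables other than `x_i`. -/
def omitVar (i : Fin 4) : P4 := ∏ k ∈ Finset.univ.erase i, X k

/-- The operator `f ↦ (∏_{k ≠ i} x_k) f²`, which is linear because squaring is. It shifts weight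
vectors by `consThree`. -/
def up (i : Fin 4) : P4 →ₗ[kk] P4 :=
  LinearMap.mulLeft kk (omitVar i) ∘ₗ (expand 2).toLinearMap

theorem up_apply (i : Fin 4) (f : P4) : up i f = omitVar i * f ^ 2 := by
  simp [up, expand_zmod]

theorem isHomogeneous_omitVar (i : Fin 4) : (omitVar i).IsHomogeneous 3 := by
  have h := IsHomogeneous.prod (Finset.univ.erase i) (fun k => (X k : P4)) (fun _ => 1)
    fun k _ => isHomogeneous_X kk k
  simpa [omitVar] using h

theorem omitVar_eq_monomial (i : Fin 4) : omitVar i = monomial (omitExp i) 1 := by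
  rw [omitVar, monomial_eq, Finsupp.prod_fintype _ _ fun _ => pow_zero _, C_1, one_mul,
    ← Finset.mul_prod_erase _ _ (Finset.mem_univ i), omitExp_apply, if_pos rfl, pow_zero, one_mul]
  refine Finset.prod_congr rfl fun k hk => ?_
  rw [omitExp_apply, if_neg (Finset.ne_of_mem_erase hk), pow_one]

theorem up_monomial (i : Fin 4) (d : Fin 4 →₀ ℕ) :
    up i (monomial d 1) = monomial (upExp i d) 1 := by
  rw [up_apply, omitVar_eq_monomial, monomial_pow, monomial_mul, upExp, one_pow, one_mul]

theorem degree_upExp (i : Fin 4) (d : Fin 4 →₀ ℕ) : (upExp i d).degree = 2 * d.degree + 3 := by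
  rw [upExp, map_add, map_nsmul, degree_omitExp, smul_eq_mul, add_comm]

theorem up_homogeneousComponent (i : Fin 4) (n : ℕ) (f : P4) :
    up i (homogeneousComponent n f) = homogeneousComponent (2 * n + 3) (up i f) := by
  refine LinearMap.congr_fun (f := up i ∘ₗ homogeneousComponent n)
    (g := homogeneousComponent (2 * n + 3) ∘ₗ up i) (linearMap_ext fun d => ?_) f
  have degree_iff : (upExp i d).degree = 2 * n + 3 ↔ d.degree = n := by
    rw [degree_upExp]
    omega
  simp only [LinearMap.comp_apply, up_monomial, homogeneousComponent_monomial, apply_ite (up i),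
    degree_iff, map_zero]

theorem sqTotal_omitVar_mul_sq_sub_mem_lower (i : Fin 4) (f : P4) (w : ℕ → ℕ) :
    sqTotal (omitVar i) * f ^ 2 - omitVar i * f ^ 2 ∈ lower (consThree w) := by
  have expansion : sqTotal (omitVar i) = ∑ T ∈ (Finset.univ.erase i).powerset,
      (∏ k ∈ T, X k) * (∏ k ∈ Finset.univ.erase i \ T, X k) ^ 2 := by
    simp only [omitVar, sqTotal, map_prod, aeval_X, Finset.prod_add, Finset.prod_pow]
  have card_erase : (Finset.univ.erase i).card = 3 := by simp
  rw [expansion, ← Finset.add_sum_erase _ _ (Finset.mem_powerset_self _), Finset.sdiff_self,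
    Finset.prod_empty, one_pow, mul_one, ← omitVar, add_mul, add_sub_cancel_left, Finset.sum_mul]
  refine sum_mem fun T hT => ?_
  rw [Finset.mem_erase, Finset.mem_powerset] at hT
  have hom := IsHomogeneous.prod T (fun k => (X k : P4)) (fun _ => 1)
    fun k _ => isHomogeneous_X kk k
  rw [mul_assoc, ← mul_pow]
  refine mul_sq_mem_lower hom ?_ _ w
  have := Finset.card_lt_card (hT.2.ssubset_of_ne hT.1)
  simpa [card_erase] using this

theorem up_mem_lower (i : Fin 4) {f : P4} {w : ℕ → ℕ} (hf : f ∈ lower w) :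
    up i f ∈ lower (consThree w) := by
  suffices h : lower w ≤ (lower (consThree w)).comap (up i) from h hf
  refine restrictSupport_le fun d hd => ?_
  rw [Submodule.mem_comap, up_monomial]
  exact monomial_mem_lower (by rwa [wv_upExp, consThree_wLt_consThree])

theorem up_mem_hitsOrLower (i : Fin 4) {f : P4} {w : ℕ → ℕ} (hf : f ∈ hitsOrLower w) :
    up i f ∈ hitsOrLower (consThree w) := by
  suffices h : hitsOrLower w ≤ (hitsOrLower (consThree w)).comap (up i) from h hf
  refine sup_le (iSup_le fun n => Submodule.span_le.2 ?_) fun f hf =>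
    Submodule.mem_sup_right (up_mem_lower i hf)
  rintro _ ⟨m, hmn, g, hg, rfl⟩
  have hhit : homogeneousComponent (2 * n + 3) (sqTotal (up i g)) ∈ hits := by
    refine homogeneousComponent_sqTotal_mem_hits (m := 3 + m * 2) ?_ (by omega)
    rw [up_apply]
    exact (isHomogeneous_omitVar i).mul (hg.pow 2)
  have hlow := homogeneousComponent_mem_restrictSupport
    (sqTotal_omitVar_mul_sq_sub_mem_lower i (sqTotal g) w) (2 * n + 3)
  rw [SetLike.mem_coe, Submodule.mem_comap, up_homogeneousComponent]
  rw [map_sub, ← map_pow, ← map_mul, ← up_apply, map_pow, ← up_apply] at hlow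
  rw [← sub_sub_cancel (homogeneousComponent (2 * n + 3) (sqTotal (up i g)))
    (homogeneousComponent (2 * n + 3) (up i (sqTotal g)))]
  exact sub_mem (Submodule.mem_sup_left hhit) (Submodule.mem_sup_right hlow)

end Up

section SqOne

/-- The Steenrod square `Sq¹`, which is the derivation with `x_i ↦ x_i²`. -/
def sqOne : Derivation kk P4 P4 := mkDerivation kk fun i => X i ^ 2

theorem sqOne_X (i : Fin 4) : sqOne (X i) = X i ^ 2 := mkDerivation_X kk _ i

theorem sqOne_sq (f : P4) : sqOne (f ^ 2) = 0 := by
  rw [Derivation.leibniz_pow, CharTwo.two_nsmul]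

theorem exists_sqTotal_monomial_sub_mem (d : Fin 4 →₀ ℕ) (a : kk) :
    ∃ n, (monomial d a).IsHomogeneous n ∧ (sqOne (monomial d a)).IsHomogeneous (n + 1) ∧
      sqTotal (monomial d a) - monomial d a - sqOne (monomial d a) ∈
        idealOfVars (Fin 4) kk ^ (n + 2) := by
  refine induction_on_monomial (motive := fun f => ∃ n, f.IsHomogeneous n ∧
    (sqOne f).IsHomogeneous (n + 1) ∧ sqTotal f - f - sqOne f ∈ idealOfVars (Fin 4) kk ^ (n + 2))
    (fun a => ?_) ?_ d a
  · have hC : sqOne (C a) = 0 := sqOne.map_algebraMap a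
    have hT : sqTotal (C a) = C a := sqTotal.commutes a
    exact ⟨0, isHomogeneous_C _ _, hC ▸ isHomogeneous_zero _ _ _, by simp [hC, hT]⟩
  · rintro f i ⟨n, hf, hsq, hlow⟩
    have hXi : (X i : P4) ∈ idealOfVars (Fin 4) kk := Ideal.subset_span ⟨i, rfl⟩
    have leibniz : sqOne (f * X i) = f * X i ^ 2 + sqOne f * X i := by
      rw [Derivation.leibniz, sqOne_X, smul_eq_mul, smul_eq_mul, mul_comm (X i)]
    have expansion : sqTotal (f * X i) - f * X i - sqOne (f * X i) =
        (sqTotal f - f - sqOne f) * (X i + X i ^ 2) + sqOne f * X i ^ 2 := by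
      rw [leibniz, map_mul, show sqTotal (X i) = X i + X i ^ 2 from aeval_X _ _]
      ring
    have hX : (X i + X i ^ 2 : P4) ∈ idealOfVars (Fin 4) kk :=
      add_mem hXi (Ideal.pow_mem_of_mem _ hXi 2 two_pos)
    refine ⟨n + 1, hf.mul (isHomogeneous_X _ i), leibniz ▸ ?_, expansion ▸ add_mem ?_ ?_⟩
    · exact (hf.mul ((isHomogeneous_X _ i).pow 2)).add (hsq.mul (isHomogeneous_X _ i))
    · exact Ideal.mul_mem_mul hlow hX
    · exact mem_pow_idealOfVars_of_isHomogeneous (hsq.mul ((isHomogeneous_X _ i).pow 2))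

theorem sqOne_mem_hits (f : P4) : sqOne f ∈ hits := by
  suffices h : restrictSupport kk Set.univ ≤ hits.comap sqOne.toLinearMap from h (by simp)
  refine restrictSupport_le fun d _ => ?_
  obtain ⟨n, hd, hsq, hlow⟩ := exists_sqTotal_monomial_sub_mem d 1
  have component :
      homogeneousComponent (n + 1) (sqTotal (monomial d 1)) = sqOne (monomial d 1) := by
    have h := homogeneousComponent_eq_zero_of_mem_pow_idealOfVars hlow (n + 1).lt_succ_self
    rwa [map_sub, map_sub, homogeneousComponent_of_mem hd, if_neg n.succ_ne_self, sub_zero,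
      homogeneousComponent_eq_self hsq, sub_eq_zero] at h
  change sqOne (monomial d 1) ∈ hits
  rw [← component]
  exact homogeneousComponent_sqTotal_mem_hits hd n.lt_succ_self

theorem omitVar_mul_X (i : Fin 4) : omitVar i * X i = ∏ k, X k :=
  Finset.prod_erase_mul _ _ (Finset.mem_univ i)

theorem sqOne_prod_X : sqOne (∏ k, X k) = (∏ k, X k) * ∑ i, X i := by
  simp only [Fin.prod_univ_four, Fin.sum_univ_four, Derivation.leibniz, sqOne_X, smul_eq_mul]
  ring

theorem sqOne_prod_X_mul_sq (f : P4) : sqOne ((∏ k, X k) * f ^ 2) = ∑ i, up i (X i * f) := by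
  rw [Derivation.leibniz, sqOne_sq, smul_zero, zero_add, sqOne_prod_X, smul_eq_mul, ← mul_assoc,
    Finset.mul_sum]
  refine Finset.sum_congr rfl fun i _ => ?_
  rw [up_apply, ← omitVar_mul_X i]
  ring

theorem exists_up_pow_X_mul_eq (k : ℕ) (f : P4) : ∃ g, ∀ i, (up i ^ k) (X i * f) = X i * g := by
  induction k with
  | zero => exact ⟨f, fun _ => rfl⟩
  | succ k ih =>
    obtain ⟨g, hg⟩ := ih
    refine ⟨(∏ j, X j) * g ^ 2, fun i => ?_⟩
    rw [pow_succ', Module.End.mul_apply, hg, up_apply, ← omitVar_mul_X i]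
    ring

theorem sum_up_pow_X_mul_mem_hits (k : ℕ) (f : P4) :
    ∑ i, (up i ^ (k + 1)) (X i * f) ∈ hits := by
  obtain ⟨g, hg⟩ := exists_up_pow_X_mul_eq k f
  simp only [pow_succ', Module.End.mul_apply, hg, ← sqOne_prod_X_mul_sq]
  exact sqOne_mem_hits _

end SqOne

section Words

/-- The composite of the operators `up i` along a list of indices, the head being applied last. -/
def upWord (L : List (Fin 4)) : Module.End kk P4 := (L.map up).prod

theorem upWord_cons (i : Fin 4) (L : List (Fin 4)) : upWord (i :: L) = up i * upWord L := rfl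

theorem upWord_append (L L' : List (Fin 4)) : upWord (L ++ L') = upWord L * upWord L' := by
  rw [upWord, List.map_append, List.prod_append, ← upWord, ← upWord]

theorem upWord_replicate (i : Fin 4) (k : ℕ) : upWord (List.replicate k i) = up i ^ k := by
  rw [upWord, List.map_replicate, List.prod_replicate]

theorem upWord_mem_hitsOrLower (L : List (Fin 4)) {f : P4} {w : ℕ → ℕ} (hf : f ∈ hitsOrLower w) :
    upWord L f ∈ hitsOrLower (consThree^[L.length] w) := by
  induction L with
  | nil => exact hf
  | cons i L ih =>
    rw [List.length_cons, Function.iterate_succ_apply']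
    exact up_mem_hitsOrLower i ih

/-- Words of equal length that induce the same operator modulo hit polynomials and monomials of
lower weight. -/
def WordCongr (L L' : List (Fin 4)) : Prop :=
  L.length = L'.length ∧
    ∀ w f, upWord L f - upWord L' f ∈ hitsOrLower (consThree^[L.length] w)

namespace WordCongr

theorem refl (L : List (Fin 4)) : WordCongr L L :=
  ⟨rfl, fun w f => by rw [sub_self]; exact zero_mem _⟩

theorem symm {L L' : List (Fin 4)} (h : WordCongr L L') : WordCongr L' L :=
  ⟨h.1.symm, fun w f => by
    rw [← neg_sub, ← h.1]
    exact neg_mem (h.2 w f)⟩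

theorem trans {L₁ L₂ L₃ : List (Fin 4)} (h : WordCongr L₁ L₂) (h' : WordCongr L₂ L₃) :
    WordCongr L₁ L₃ :=
  ⟨h.1.trans h'.1, fun w f => by
    rw [← sub_add_sub_cancel _ (upWord L₂ f)]
    exact add_mem (h.2 w f) (h.1 ▸ h'.2 w f)⟩

theorem cons (i : Fin 4) {L L' : List (Fin 4)} (h : WordCongr L L') :
    WordCongr (i :: L) (i :: L') :=
  ⟨congrArg (· + 1) h.1, fun w f => by
    rw [upWord_cons, upWord_cons, Module.End.mul_apply, Module.End.mul_apply, ← map_sub,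
      List.length_cons, Function.iterate_succ_apply']
    exact up_mem_hitsOrLower i (h.2 w f)⟩

end WordCongr

theorem up_pow_mem_lower (i : Fin 4) (k : ℕ) {f : P4} {w : ℕ → ℕ} (hf : f ∈ lower w) :
    (up i ^ k) f ∈ lower (consThree^[k] w) := by
  induction k with
  | zero => exact hf
  | succ k ih =>
    rw [pow_succ', Module.End.mul_apply, Function.iterate_succ_apply']
    exact up_mem_lower i ih

/-- The product of the variables other than `x_a` and `x_b`. -/
def omitTwoVars (a b : Fin 4) : P4 := ∏ k ∈ (Finset.univ.erase a).erase b, X k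

theorem X_mul_omitTwoVars {a b : Fin 4} (hab : a ≠ b) : X b * omitTwoVars a b = omitVar a :=
  Finset.mul_prod_erase _ _ (Finset.mem_erase.2 ⟨hab.symm, Finset.mem_univ b⟩)

theorem omitTwoVars_comm (a b : Fin 4) : omitTwoVars a b = omitTwoVars b a := by
  rw [omitTwoVars, Finset.erase_right_comm, omitTwoVars]

theorem X_mul_omitTwoVars_mul_sq_mem_lower {a b p : Fin 4} (hab : a ≠ b)
    (hp : p ∈ (Finset.univ.erase a).erase b) (f : P4) (w : ℕ → ℕ) :
    X p * (omitTwoVars a b * f ^ 2) ∈ lower (consThree w) := by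
  have regroup : X p * (omitTwoVars a b * f ^ 2) =
      (∏ k ∈ ((Finset.univ.erase a).erase b).erase p, X k) * (X p * f) ^ 2 := by
    rw [omitTwoVars, ← Finset.mul_prod_erase _ _ hp]
    ring
  have card_eq : (((Finset.univ.erase a).erase b).erase p).card = 1 := by
    rw [Finset.card_erase_of_mem hp, Finset.card_erase_of_mem (by simp [hab.symm]),
      Finset.card_erase_of_mem (Finset.mem_univ a), Finset.card_univ, Fintype.card_fin]
  rw [regroup]
  refine mul_sq_mem_lower (IsHomogeneous.prod _ _ (fun _ => 1) fun k _ => isHomogeneous_X kk k)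
    ?_ _ w
  simp [card_eq]

theorem up_pow_up_add_up_pow_up_mem {a b : Fin 4} (hab : a ≠ b) (k : ℕ) (f : P4) (w : ℕ → ℕ) :
    (up a ^ (k + 1)) (up b f) + (up b ^ (k + 1)) (up a f) ∈
      hitsOrLower (consThree^[k + 2] w) := by
  have hsum := sum_up_pow_X_mul_mem_hits k (omitTwoVars a b * f ^ 2)
  have hrest : ∑ p ∈ (Finset.univ.erase a).erase b,
      (up p ^ (k + 1)) (X p * (omitTwoVars a b * f ^ 2)) ∈ lower (consThree^[k + 2] w) :=
    sum_mem fun p hp =>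
      up_pow_mem_lower p (k + 1) (X_mul_omitTwoVars_mul_sq_mem_lower hab hp f w)
  have hXa : X a * (omitTwoVars a b * f ^ 2) = up b f := by
    rw [omitTwoVars_comm, ← mul_assoc, X_mul_omitTwoVars hab.symm, up_apply]
  have hXb : X b * (omitTwoVars a b * f ^ 2) = up a f := by
    rw [← mul_assoc, X_mul_omitTwoVars hab, up_apply]
  rw [← Finset.add_sum_erase _ _ (Finset.mem_univ a),
    ← Finset.add_sum_erase _ _ (Finset.mem_erase.2 ⟨hab.symm, Finset.mem_univ b⟩), hXa, hXb,
    ← add_assoc] at hsum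
  have := sub_mem (Submodule.mem_sup_left hsum) (Submodule.mem_sup_right hrest :
    _ ∈ hitsOrLower (consThree^[k + 2] w))
  rwa [add_sub_cancel_right] at this

theorem card_toFinset_eq_length_iff_nodup {α : Type*} [DecidableEq α] {L : List α} :
    L.toFinset.card = L.length ↔ L.Nodup :=
  Multiset.toFinset_card_eq_card_iff_nodup (m := (L : Multiset α))

theorem exists_perm_cons_of_not_nodup {α : Type*} {L : List α} (h : ¬ L.Nodup) :
    ∃ x T, x ∈ T ∧ L.Perm (x :: T) := by
  classical
  obtain ⟨x, hx⟩ := List.exists_duplicate_iff_not_nodup.2 h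
  refine ⟨x, L.erase x, ?_, List.perm_cons_erase hx.mem⟩
  have := List.duplicate_iff_two_le_count.1 hx
  exact List.count_pos_iff.1 (by rw [List.count_erase_self]; omega)

namespace WordCongr

theorem swap (a b : Fin 4) (L : List (Fin 4)) : WordCongr (a :: b :: L) (b :: a :: L) := by
  rcases eq_or_ne a b with rfl | hab
  · exact refl _
  refine ⟨rfl, fun w f => ?_⟩
  have h := up_pow_up_add_up_pow_up_mem hab 0 (upWord L f) (consThree^[L.length] w)
  rwa [zero_add, pow_one, pow_one, ← Function.iterate_add_apply, add_comm 2,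
    ← ZModModule.sub_eq_add] at h

theorem repeat_left_right {a b : Fin 4} (hab : a ≠ b) (L : List (Fin 4)) :
    WordCongr (a :: a :: b :: L) (b :: b :: a :: L) := by
  refine ⟨rfl, fun w f => ?_⟩
  have h := up_pow_up_add_up_pow_up_mem hab 1 (upWord L f) (consThree^[L.length] w)
  rwa [one_add_one_eq_two, pow_two, pow_two, ← Function.iterate_add_apply, add_comm (1 + 2),
    ← ZModModule.sub_eq_add] at h

theorem of_perm {L L' : List (Fin 4)} (h : L.Perm L') : WordCongr L L' := by
  induction h with
  | nil => exact refl _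
  | cons i _ ih => exact ih.cons i
  | swap a b L => exact swap b a L
  | trans _ _ ih ih' => exact ih.trans ih'

theorem cons_cons_of_mem {x y : Fin 4} {L : List (Fin 4)} (hx : x ∈ L) (hy : y ∈ L) :
    WordCongr (x :: L) (y :: L) := by
  rcases eq_or_ne x y with rfl | hxy
  · exact refl _
  have hy' : y ∈ L.erase x := (List.mem_erase_of_ne hxy.symm).2 hy
  have perm : L.Perm (x :: y :: (L.erase x).erase y) :=
    (List.perm_cons_erase hx).trans ((List.perm_cons_erase hy').cons x)
  exact (of_perm (perm.cons x)).trans <| (repeat_left_right hxy _).trans <|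
    of_perm <| ((List.Perm.swap x y _).trans perm.symm).cons y

theorem of_toFinset_eq {L L' : List (Fin 4)} (hlen : L.length = L'.length)
    (hset : L.toFinset = L'.toFinset) : WordCongr L L' := by
  induction hn : L.length using Nat.strong_induction_on generalizing L L' with
  | _ n ih =>
    have nodup_iff : L.Nodup ↔ L'.Nodup := by
      rw [← card_toFinset_eq_length_iff_nodup, ← card_toFinset_eq_length_iff_nodup, hlen, hset]
    by_cases hL : L.Nodup
    · exact of_perm (List.perm_of_nodup_nodup_toFinset_eq hL (nodup_iff.1 hL) hset)
    obtain ⟨x, T, hx, hperm⟩ := exists_perm_cons_of_not_nodup hL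
    obtain ⟨y, T', hy, hperm'⟩ := exists_perm_cons_of_not_nodup (mt nodup_iff.2 hL)
    have hset' : T.toFinset = T'.toFinset := by
      rwa [List.toFinset_eq_of_perm _ _ hperm, List.toFinset_eq_of_perm _ _ hperm',
        List.toFinset_cons, List.toFinset_cons, Finset.insert_eq_of_mem (List.mem_toFinset.2 hx),
        Finset.insert_eq_of_mem (List.mem_toFinset.2 hy)] at hset
    have length_T : L.length = T.length + 1 := hperm.length_eq
    have length_T' : L'.length = T'.length + 1 := hperm'.length_eq
    have hyT : y ∈ T := by rwa [← List.mem_toFinset, hset', List.mem_toFinset]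
    have tails : WordCongr T T' := ih T.length (by omega) (by omega) hset' rfl
    exact (of_perm hperm).trans <| (cons_cons_of_mem hx hyT).trans <|
      (tails.cons y).trans (of_perm hperm').symm

end WordCongr

theorem exists_length_eq_toFinset_eq {n : ℕ} {I : Finset (Fin 4)} (hI : I.Nonempty)
    (hn : I.card ≤ n) : ∃ L : List (Fin 4), L.length = n ∧ L.toFinset = I := by
  obtain ⟨i, hi⟩ := hI
  refine ⟨List.replicate (n - I.card) i ++ I.toList, ?_, ?_⟩
  · simp [hn]
  · ext k
    simp only [List.mem_toFinset, List.mem_append, List.mem_replicate, Finset.mem_toList]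
    exact ⟨fun h => h.elim (fun h => h.2 ▸ hi) id, .inr⟩

end Words

section SetClass

/-- The class of a polynomial modulo hit polynomials and monomials of weight less than `w`. -/
def weightClass (w : ℕ → ℕ) : P4 →ₗ[kk] P4 ⧸ hitsOrLower w := (hitsOrLower w).mkQ

theorem weightClass_eq_zero_iff {w : ℕ → ℕ} {f : P4} :
    weightClass w f = 0 ↔ f ∈ hitsOrLower w :=
  Submodule.Quotient.mk_eq_zero _

open Classical in
/-- The class of `upWord L f` for any word `L` of length `n` whose set of letters is `I`; it is
independent of `L` by `WordCongr.of_toFinset_eq`. The junk value when there is no such word is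
`0`. -/
def setClass (b : ℕ → ℕ) (n : ℕ) (I : Finset (Fin 4)) :
    P4 →ₗ[kk] P4 ⧸ hitsOrLower (consThree^[n] b) :=
  if h : ∃ L : List (Fin 4), L.length = n ∧ L.toFinset = I then
    weightClass (consThree^[n] b) ∘ₗ upWord h.choose
  else 0

theorem setClass_apply (b : ℕ → ℕ) {n : ℕ} {I : Finset (Fin 4)} {L : List (Fin 4)}
    (hn : L.length = n) (hI : L.toFinset = I) (f : P4) :
    setClass b n I f = weightClass (consThree^[n] b) (upWord L f) := by
  have h : ∃ L : List (Fin 4), L.length = n ∧ L.toFinset = I := ⟨L, hn, hI⟩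
  obtain ⟨hlen, hset⟩ := h.choose_spec
  have congr := (WordCongr.of_toFinset_eq (hlen.trans hn.symm) (hset.trans hI.symm)).2 b f
  rw [hlen] at congr
  rwa [setClass, dif_pos h, LinearMap.comp_apply, ← sub_eq_zero, ← map_sub,
    weightClass_eq_zero_iff]

theorem setClass_eq_zero {b : ℕ → ℕ} {f : P4} (hf : f ∈ hitsOrLower b) (n : ℕ)
    (I : Finset (Fin 4)) : setClass b n I f = 0 := by
  by_cases h : ∃ L : List (Fin 4), L.length = n ∧ L.toFinset = I
  · obtain ⟨L, rfl, hI⟩ := h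
    rw [setClass_apply b rfl hI, weightClass_eq_zero_iff]
    exact upWord_mem_hitsOrLower L hf
  · rw [setClass, dif_neg h, LinearMap.zero_apply]

theorem sum_setClass_insert_X_mul (b : ℕ → ℕ) {n : ℕ} {I : Finset (Fin 4)} (hI : I.card < n)
    (f : P4) : ∑ i, setClass b n (insert i I) (X i * f) = 0 := by
  obtain ⟨n, rfl⟩ : ∃ m, n = m + 1 := ⟨n - 1, by omega⟩
  rcases I.eq_empty_or_nonempty with rfl | hne
  · have word : ∀ i, setClass b (n + 1) (insert i ∅) (X i * f) =
        weightClass _ ((up i ^ (n + 1)) (X i * f)) := fun i => by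
      rw [← upWord_replicate, setClass_apply b List.length_replicate]
      rw [List.toFinset_replicate_of_ne_zero n.succ_ne_zero, insert_empty_eq]
    simp only [word, ← map_sum]
    exact weightClass_eq_zero_iff.2 (Submodule.mem_sup_left (sum_up_pow_X_mul_mem_hits n f))
  · obtain ⟨L, hL, hset⟩ := exists_length_eq_toFinset_eq hne (Nat.lt_succ_iff.1 hI)
    have word : ∀ i, setClass b (n + 1) (insert i I) (X i * f) =
        weightClass _ (upWord L (up i (X i * f))) := fun i => by
      have hset' : (L ++ [i]).toFinset = insert i I := by
        rw [List.toFinset_append, hset, Finset.insert_eq, Finset.union_comm]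
        rfl
      rw [setClass_apply b (by simp [hL]) hset', upWord_append]
      rfl
    have mem : upWord L (∑ i, up i (X i * f)) ∈ hitsOrLower (consThree^[L.length] (consThree b)) :=
      upWord_mem_hitsOrLower L <| Submodule.mem_sup_left <| by
        simpa using sum_up_pow_X_mul_mem_hits 0 f
    rw [hL, ← Function.iterate_succ_apply] at mem
    rw [Finset.sum_congr rfl fun i _ => word i, ← map_sum, ← map_sum]
    exact weightClass_eq_zero_iff.2 mem

theorem exists_monomial_eq_upWord {b : ℕ → ℕ} {n : ℕ} {d : Fin 4 →₀ ℕ}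
    (h : wv d = consThree^[n] b) : ∃ L d', L.length = n ∧ wv d' = b ∧
      monomial d (1 : kk) = upWord L (monomial d' 1) := by
  induction n generalizing d with
  | zero => exact ⟨[], d, rfl, h, rfl⟩
  | succ n ih =>
    rw [Function.iterate_succ_apply'] at h
    obtain ⟨i, d, rfl, hd⟩ := exists_eq_upExp_of_wv_eq h
    obtain ⟨L, d', hL, hd', heq⟩ := ih hd
    refine ⟨i :: L, d', congrArg (· + 1) hL, hd', ?_⟩
    rw [upWord_cons, Module.End.mul_apply, ← heq, up_monomial]

theorem eqOn_restrictSupport_of_eq_upWord {V : Type*} [AddCommGroup V] [Module kk V] {b : ℕ → ℕ}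
    {n : ℕ} {φ ψ : P4 →ₗ[kk] V} (hφ : ∀ f ∈ lower (consThree^[n] b), φ f = 0)
    (hψ : ∀ f ∈ lower (consThree^[n] b), ψ f = 0)
    (h : ∀ L d, L.length = n → wv d = b →
      φ (upWord L (monomial d 1)) = ψ (upWord L (monomial d 1))) :
    Set.EqOn φ ψ (restrictSupport kk {d | wLe (wv d) (consThree^[n] b)}) := by
  suffices hle : restrictSupport kk {d | wLe (wv d) (consThree^[n] b)} ≤ LinearMap.eqLocus φ ψ from
    hle
  refine restrictSupport_le fun d hd => ?_
  rw [LinearMap.mem_eqLocus]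
  rcases hd with hd | hd
  · obtain ⟨L, d', hL, hd', heq⟩ := exists_monomial_eq_upWord hd
    rw [heq, h L d' hL hd']
  · rw [hφ _ (monomial_mem_lower hd), hψ _ (monomial_mem_lower hd)]

end SetClass

section Permanent

variable {n R : Type*} [Fintype n] [CommRing R]

theorem sum_single_comp_eq_sum_single_iff {p : n → n} :
    ∑ i, Finsupp.single (p i) 1 = ∑ i, Finsupp.single i 1 ↔ p.Bijective := by
  classical
  constructor
  · intro h
    refine Finite.surjective_iff_bijective.1 fun k => ?_
    by_contra! hk
    have := DFunLike.congr_fun h k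
    simp [Finsupp.single_apply, hk] at this
  · intro h
    exact h.sum_comp fun i => Finsupp.single i 1

variable [DecidableEq n]

theorem coeff_prod_sum_smul_X (M : Matrix n n R) :
    coeff (∑ i, Finsupp.single i 1) (∏ i, ∑ j, M i j • X j : MvPolynomial n R) = M.permanent := by
  have term (p : n → n) : ∏ i, M i (p i) • (X (p i) : MvPolynomial n R) =
      monomial (∑ i, Finsupp.single (p i) 1) (∏ i, M i (p i)) := by
    simp only [X, smul_monomial, smul_eq_mul, mul_one, monomial_sum_prod]
  rw [Finset.prod_univ_sum, Fintype.piFinset_univ, coeff_sum, ← Matrix.permanent_transpose]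
  simp only [term, coeff_monomial]
  refine (Fintype.sum_of_injective (fun σ : Equiv.Perm n => ⇑σ) DFunLike.coe_injective _ _
    (fun p hp => if_neg fun h => hp ?_) fun σ => ?_).symm
  · exact ⟨Equiv.ofBijective p (sum_single_comp_eq_sum_single_iff.1 h), rfl⟩
  · rw [if_pos (sum_single_comp_eq_sum_single_iff.2 σ.bijective)]
    rfl

theorem permanent_eq_det [CharP R 2] (M : Matrix n n R) : M.permanent = M.det := by
  rw [Matrix.permanent, Matrix.det_apply]
  refine Finset.sum_congr rfl fun σ _ => ?_
  rcases Int.units_eq_one_or (Equiv.Perm.sign σ) with h | h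
  · rw [h, one_smul]
  · rw [h, Units.neg_smul, one_smul, CharTwo.neg_eq]

end Permanent

section Functionals

/-- The linear functional sending `f` to the coefficient of `x^d` in `f(Mx)`. -/
def substCoeff (M : Matrix (Fin 4) (Fin 4) kk) (d : Fin 4 →₀ ℕ) : P4 →ₗ[kk] kk :=
  lcoeff kk d ∘ₗ (substM M).toLinearMap

theorem substCoeff_apply (M : Matrix (Fin 4) (Fin 4) kk) (d : Fin 4 →₀ ℕ) (f : P4) :
    substCoeff M d f = coeff d (substM M f) := rfl

theorem substM_one (f : P4) : substM 1 f = f := by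
  refine DFunLike.congr_fun (f := substM 1) (g := AlgHom.id kk P4) (algHom_ext fun i => ?_) f
  simp [substM, Matrix.one_apply]

theorem substM_X (M : Matrix (Fin 4) (Fin 4) kk) (i : Fin 4) :
    substM M (X i) = ∑ j, M i j • X j :=
  aeval_X _ i

theorem isHomogeneous_substM (M : Matrix (Fin 4) (Fin 4) kk) {f : P4} {n : ℕ}
    (hf : f.IsHomogeneous n) : (substM M f).IsHomogeneous n := by
  have h := hf.aeval (S := kk) (fun i => ∑ j, M i j • (X j : P4)) (n := 1) fun i =>
    IsHomogeneous.sum _ _ _ fun j _ => by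
      rw [smul_eq_C_mul]
      exact isHomogeneous_C_mul_X _ _
  rwa [one_mul] at h

theorem substCoeff_monomial_of_degree_ne (M : Matrix (Fin 4) (Fin 4) kk) {d d' : Fin 4 →₀ ℕ}
    (h : d'.degree ≠ d.degree) : substCoeff M d (monomial d' 1) = 0 :=
  (isHomogeneous_substM M (isHomogeneous_monomial 1 rfl)).coeff_eq_zero h.symm

theorem substCoeff_omitExp_zero_omitVar (M : Matrix (Fin 4) (Fin 4) kk) (i : Fin 4) :
    substCoeff M (omitExp 0) (omitVar i) = M.adjugate 0 i := by
  have exp_eq : (∑ k : Fin 4, Finsupp.single k 1) = Finsupp.single 0 1 + omitExp 0 := by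
    ext k
    revert k
    simp only [Finsupp.finsetSum_apply, Finsupp.add_apply, Finsupp.single_apply, omitExp_apply]
    decide
  have prod_eq : ∏ k, ∑ j, M.updateRow i (Pi.single 0 1) k j • (X j : P4) =
      X 0 * substM M (omitVar i) := by
    rw [← Finset.mul_prod_erase _ _ (Finset.mem_univ i), omitVar, map_prod]
    congr 1
    · simp [Pi.single_apply]
    · refine Finset.prod_congr rfl fun k hk => ?_
      rw [substM_X, Matrix.updateRow_ne (Finset.ne_of_mem_erase hk)]
  rw [Matrix.adjugate_apply, ← permanent_eq_det, ← coeff_prod_sum_smul_X, exp_eq, prod_eq,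
    coeff_X_mul, substCoeff_apply]

theorem omitExp_le_one (i k : Fin 4) : omitExp i k ≤ 1 := by
  rw [omitExp_apply]
  split_ifs <;> omega

theorem substCoeff_upExp_up (M : Matrix (Fin 4) (Fin 4) kk) (d : Fin 4 →₀ ℕ) (i : Fin 4)
    (f : P4) :
    substCoeff M (upExp 0 d) (up i f) = M.adjugate 0 i * substCoeff M d f := by
  rw [substCoeff_apply, up_apply, map_mul, map_pow, upExp,
    coeff_add_two_nsmul_mul_sq (isHomogeneous_substM M (isHomogeneous_omitVar i))
      (omitExp_le_one 0) (degree_omitExp 0).ge,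
    ← substCoeff_omitExp_zero_omitVar, substCoeff_apply, substCoeff_apply]

theorem substCoeff_upWord (M : Matrix (Fin 4) (Fin 4) kk) (d : Fin 4 →₀ ℕ) (L : List (Fin 4))
    (f : P4) : substCoeff M ((upExp 0)^[L.length] d) (upWord L f) =
      (L.map (M.adjugate 0)).prod * substCoeff M d f := by
  induction L with
  | nil => exact (one_mul _).symm
  | cons i L ih =>
    rw [List.length_cons, Function.iterate_succ_apply', upWord_cons, Module.End.mul_apply,
      substCoeff_upExp_up, ih, List.map_cons, List.prod_cons, mul_assoc]

theorem exists_eq_add_two_nsmul (d : Fin 4 →₀ ℕ) :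
    ∃ ε d' : Fin 4 →₀ ℕ, d = ε + 2 • d' ∧ ε.degree = wv d 0 ∧ ∀ j, wv d (j + 1) = wv d' j := by
  refine ⟨d.mapRange (· % 2) rfl, d.mapRange (· / 2) rfl, Finsupp.ext fun i => ?_, ?_, fun j => ?_⟩
  · simp [Nat.mod_add_div]
  · simp [Finsupp.degree_eq_sum, wv_zero]
  · simp [wv, Nat.div_div_eq_div_mul, pow_succ']

theorem substCoeff_upExp_monomial_of_lt (M : Matrix (Fin 4) (Fin 4) kk) {d d' : Fin 4 →₀ ℕ}
    (h : wv d' 0 < 3) : substCoeff M (upExp 0 d) (monomial d' 1) = 0 := by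
  obtain ⟨ε, d', rfl, degree_ε, -⟩ := exists_eq_add_two_nsmul d'
  have factor : (monomial (ε + 2 • d') 1 : P4) = monomial ε 1 * monomial d' 1 ^ 2 := by
    rw [monomial_pow, monomial_mul, one_pow, mul_one]
  have hom : (substM M (monomial ε 1)).IsHomogeneous (wv (ε + 2 • d') 0) :=
    isHomogeneous_substM M (isHomogeneous_monomial 1 degree_ε)
  rw [substCoeff_apply, factor, map_mul, map_pow, upExp, coeff_add_two_nsmul_mul_sq hom
    (omitExp_le_one 0) (h.le.trans (degree_omitExp 0).ge),
    hom.coeff_eq_zero (by rw [degree_omitExp]; exact h.ne'), zero_mul]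

end Functionals

section Spikes

theorem eq_zero_of_odd_choose {a m t : ℕ} (h : a + m + 1 = 2 ^ t) (hodd : Odd (a.choose m)) :
    m = 0 := by
  induction t generalizing a m with
  | zero => omega
  | succ t ih =>
    rw [pow_succ] at h
    have lucas : a.choose m % 2 = (a % 2).choose (m % 2) * (a / 2).choose (m / 2) % 2 :=
      Choose.choose_modEq_choose_mod_mul_choose_div_nat
    rw [Nat.odd_iff, lucas, ← Nat.odd_iff, Nat.odd_mul] at hodd
    rcases Nat.mod_two_eq_zero_or_one m with hm | hm
    · have := ih (by omega) hodd.2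
      omega
    · rw [show a % 2 = 0 by omega, hm] at hodd
      exact absurd hodd.1 (by decide)

theorem X_add_X_sq_pow (i : Fin 4) (a : ℕ) : (X i + X i ^ 2 : P4) ^ a =
    ∑ m ∈ Finset.range (a + 1), monomial (Finsupp.single i (a + m)) (a.choose m : kk) := by
  rw [add_comm, add_pow]
  refine Finset.sum_congr rfl fun m hm => ?_
  rw [← pow_mul, ← pow_add, show 2 * m + (a - m) = a + m by grind, X_pow_eq_monomial,
    ← map_natCast C, mul_comm, C_mul_monomial, mul_one]

/-- Lucas' theorem makes a spike, a monomial all of whose exponents have the form `2 ^ t - 1`,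
invisible to the positive-degree Steenrod squares. -/
theorem eq_of_coeff_sqTotal_monomial_ne_zero {d d' : Fin 4 →₀ ℕ} (hd : ∀ i, ∃ t, d i + 1 = 2 ^ t)
    (h : coeff d (sqTotal (monomial d' 1)) ≠ 0) : d' = d := by
  have expansion : sqTotal (monomial d' 1) = ∏ i, ∑ m ∈ Finset.range (d' i + 1),
      monomial (Finsupp.single i (d' i + m)) ((d' i).choose m : kk) := by
    rw [sqTotal, aeval_monomial, map_one, one_mul, Finsupp.prod_fintype _ _ fun _ => pow_zero _]
    exact Finset.prod_congr rfl fun i _ => X_add_X_sq_pow i _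
  rw [expansion, Finset.prod_univ_sum, coeff_sum] at h
  obtain ⟨p, -, hp⟩ := Finset.exists_ne_zero_of_sum_ne_zero h
  rw [← monomial_sum_prod, coeff_monomial, ite_ne_right_iff, Finset.prod_ne_zero_iff] at hp
  ext i
  obtain ⟨t, ht⟩ := hd i
  have hi : d' i + p i = d i := by
    rw [← hp.1, Finsupp.finsetSum_apply]
    simp [Finsupp.single_apply, Finset.sum_add_distrib]
  have := eq_zero_of_odd_choose (hi ▸ ht)
    (ZMod.natCast_ne_zero_iff_odd.1 (hp.2 i (Finset.mem_univ i)))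
  omega

theorem coeff_eq_zero_of_mem_hits {d : Fin 4 →₀ ℕ} (hd : ∀ i, ∃ t, d i + 1 = 2 ^ t) {f : P4}
    (hf : f ∈ hits) : coeff d f = 0 := by
  suffices h : hits ≤ LinearMap.ker (lcoeff kk d) from h hf
  refine iSup_le fun n => Submodule.span_le.2 ?_
  rintro _ ⟨m, hmn, g, hg, rfl⟩
  rw [SetLike.mem_coe, LinearMap.mem_ker, lcoeff_apply, coeff_homogeneousComponent,
    ite_eq_right_iff]
  rintro rfl
  rw [g.as_sum, map_sum, coeff_sum]
  refine Finset.sum_eq_zero fun d' hd' => by_contra fun hne => ?_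
  have degree_d' : d'.degree = m := by_contra fun h => mem_support_iff.1 hd' (hg.coeff_eq_zero h)
  rw [Fin.eq_one_of_ne_zero _ (mem_support_iff.1 hd')] at hne
  obtain rfl := eq_of_coeff_sqTotal_monomial_ne_zero hd hne
  exact hmn.ne degree_d'.symm

/-- Exponent vectors `d` for which the coefficient of `x^d` is well defined on polynomials modulo
hit polynomials and monomials of weight less than `w`, and remains so for monomials of lower weight
after any linear substitution. The vanishing of `d 0` is what `upExp 0` preserves. -/
structure IsTestExp (w : ℕ → ℕ) (d : Fin 4 →₀ ℕ) : Prop where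
  apply_zero : d 0 = 0
  spike : ∀ i, ∃ t, d i + 1 = 2 ^ t
  substCoeff_eq_zero : ∀ M, ∀ f ∈ lower w, substCoeff M d f = 0

namespace IsTestExp

theorem upExp_zero {w : ℕ → ℕ} {d : Fin 4 →₀ ℕ} (h : IsTestExp w d) :
    IsTestExp (consThree w) (upExp 0 d) where
  apply_zero := by rw [upExp_apply, if_pos rfl, h.apply_zero]
  spike i := by
    rcases eq_or_ne i 0 with rfl | hi
    · exact ⟨0, by rw [upExp_apply, if_pos rfl, h.apply_zero]; rfl⟩
    · obtain ⟨t, ht⟩ := h.spike i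
      refine ⟨t + 1, ?_⟩
      rw [upExp_apply, if_neg hi, pow_succ]
      omega
  substCoeff_eq_zero M := by
    suffices hle : lower (consThree w) ≤ LinearMap.ker (substCoeff M (upExp 0 d)) from
      fun f hf => hle hf
    refine restrictSupport_le fun d' (hd' : wLt _ _) => ?_
    rw [LinearMap.mem_ker]
    rcases (lt_or_eq_of_le (apply_zero_le_of_wLt hd') : wv d' 0 < 3 ∨ wv d' 0 = 3) with h3 | h3
    · exact substCoeff_upExp_monomial_of_lt M h3
    · obtain ⟨i, d', rfl⟩ := exists_eq_upExp h3
      rw [wv_upExp, consThree_wLt_consThree] at hd'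
      rw [← up_monomial, substCoeff_upExp_up, h.substCoeff_eq_zero M _ (monomial_mem_lower hd'),
        mul_zero]

theorem iterate {w : ℕ → ℕ} {d : Fin 4 →₀ ℕ} (h : IsTestExp w d) (n : ℕ) :
    IsTestExp (consThree^[n] w) ((upExp 0)^[n] d) := by
  induction n with
  | zero => exact h
  | succ n ih =>
    rw [Function.iterate_succ_apply', Function.iterate_succ_apply']
    exact ih.upExp_zero

theorem coeff_eq_zero {w : ℕ → ℕ} {d : Fin 4 →₀ ℕ} (h : IsTestExp w d) {f : P4}
    (hf : f ∈ hitsOrLower w) : coeff d f = 0 := by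
  obtain ⟨g, hg, g', hg', rfl⟩ := Submodule.mem_sup.1 hf
  have := h.substCoeff_eq_zero 1 g' hg'
  rw [substCoeff_apply, substM_one] at this
  rw [coeff_add, coeff_eq_zero_of_mem_hits h.spike hg, this, add_zero]

end IsTestExp

end Spikes

section Matrices

theorem exists_ne_of_dotProduct_eq_zero {ι K : Type*} [Fintype ι] [Field K] {u v : ι → K}
    (hu : u ≠ 0) (hv : v ≠ 0) (huv : u ⬝ᵥ v = 0) :
    ∃ i j, i ≠ j ∧ u i ≠ 0 ∧ v j ≠ 0 := by
  obtain ⟨i, hi⟩ := Function.ne_iff.1 hu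
  obtain ⟨j, hj⟩ := Function.ne_iff.1 hv
  by_contra! h
  have only_i : ∀ k ≠ i, v k = 0 := fun k hk => h i k hk.symm hi
  obtain rfl : j = i := by_contra fun hij => hj (only_i j hij)
  refine mul_ne_zero hi hj ?_
  rwa [dotProduct, Finset.sum_eq_single j (fun k _ hk => by rw [only_i k hk, mul_zero])
    (by simp)] at huv

theorem exists_perm_apply_eq_apply_eq {ι : Type*} {a b i j : ι} (hab : a ≠ b) (hij : i ≠ j) :
    ∃ π : Equiv.Perm ι, π a = i ∧ π b = j := by
  classical
  refine ⟨Equiv.swap (Equiv.swap a i b) j * Equiv.swap a i, ?_, ?_⟩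
  · rw [Equiv.Perm.mul_apply, Equiv.swap_apply_left]
    refine Equiv.swap_apply_of_ne_of_ne (fun h => hab ?_) hij
    exact (Equiv.swap a i).injective ((Equiv.swap_apply_left a i).trans h)
  · rw [Equiv.Perm.mul_apply, Equiv.swap_apply_left]

theorem exists_isUnit_row_eq_mulVec_eq_single_of_ne_zero {ι K : Type*} [Fintype ι] [DecidableEq ι]
    [Field K] {u v : ι → K} (huv : u ⬝ᵥ v = 0) {a b : ι} (hab : a ≠ b) (hu : u a ≠ 0)
    (hv : v b ≠ 0) : ∃ N : Matrix ι ι K, IsUnit N ∧ N a = u ∧ N.mulVec v = Pi.single b 1 := by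
  let N : Matrix ι ι K := fun r => if r = a then u else if r = b then Pi.single b (v b)⁻¹
    else Pi.single r 1 - Pi.single b (v r / v b)
  have mulVec_a (x : ι → K) : N.mulVec x a = u ⬝ᵥ x := by simp [N, Matrix.mulVec]
  have mulVec_b (x : ι → K) : N.mulVec x b = x b / v b := by
    simp [N, Matrix.mulVec, hab.symm, div_eq_inv_mul]
  have mulVec_other (x : ι → K) {r : ι} (ha : r ≠ a) (hb : r ≠ b) :
      N.mulVec x r = x r - v r / v b * x b := by
    have row : N r = Pi.single r 1 - Pi.single b (v r / v b) := by simp [N, ha, hb]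
    rw [Matrix.mulVec, row, sub_dotProduct, single_one_dotProduct, single_dotProduct]
  refine ⟨N, Matrix.mulVec_injective_iff_isUnit.1 ?_, if_pos rfl, funext fun r => ?_⟩
  · refine (injective_iff_map_eq_zero (Matrix.mulVecLin N)).2 fun x hx => ?_
    replace hx (r : ι) : N.mulVec x r = 0 := congrFun hx r
    have x_b : x b = 0 := (div_eq_zero_iff.1 ((mulVec_b x).symm.trans (hx b))).resolve_right hv
    have x_other : ∀ r ≠ a, x r = 0 := fun r ha => by
      rcases eq_or_ne r b with rfl | hb
      · exact x_b
      · simpa [mulVec_other x ha hb, x_b] using hx r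
    have x_a : u a * x a = 0 := by
      have := (mulVec_a x).symm.trans (hx a)
      rwa [dotProduct, Finset.sum_eq_single a (fun r _ hr => by rw [x_other r hr, mul_zero])
        (by simp)] at this
    funext r
    rcases eq_or_ne r a with rfl | hr
    · exact (mul_eq_zero.1 x_a).resolve_left hu
    · exact x_other r hr
  · rcases eq_or_ne r a with rfl | ha
    · rw [mulVec_a, huv, Pi.single_eq_of_ne hab]
    rcases eq_or_ne r b with rfl | hb
    · rw [mulVec_b, div_self hv, Pi.single_eq_same]
    · rw [mulVec_other v ha hb, div_mul_cancel₀ _ hv, sub_self, Pi.single_eq_of_ne hb]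

theorem exists_isUnit_row_eq_mulVec_eq_single {ι K : Type*} [Fintype ι] [DecidableEq ι] [Field K]
    {u v : ι → K} (hu : u ≠ 0) (hv : v ≠ 0) (huv : u ⬝ᵥ v = 0) {a b : ι} (hab : a ≠ b) :
    ∃ N : Matrix ι ι K, IsUnit N ∧ N a = u ∧ N.mulVec v = Pi.single b 1 := by
  obtain ⟨i, j, hij, hui, hvj⟩ := exists_ne_of_dotProduct_eq_zero hu hv huv
  obtain ⟨π, rfl, rfl⟩ := exists_perm_apply_eq_apply_eq hab hij
  obtain ⟨N, hN, hrow, hcol⟩ := exists_isUnit_row_eq_mulVec_eq_single_of_ne_zero huv hij hui hvj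
  refine ⟨N.submatrix π id, (Matrix.isUnit_submatrix_equiv π (Equiv.refl ι)).2 hN, hrow, ?_⟩
  funext r
  have := congrFun hcol (π r)
  simp only [Pi.single_apply, π.injective.eq_iff] at this ⊢
  exact this

theorem det_eq_one_of_isUnit {M : Matrix (Fin 4) (Fin 4) kk} (hM : IsUnit M) : M.det = 1 :=
  Fin.eq_one_of_ne_zero _ ((Matrix.isUnit_iff_isUnit_det M).1 hM).ne_zero

theorem adjugate_eq_inv {M : Matrix (Fin 4) (Fin 4) kk} (hM : IsUnit M) : M.adjugate = M⁻¹ := by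
  rw [Matrix.inv_def, det_eq_one_of_isUnit hM, Ring.inverse_one, one_smul]

theorem adjugate_row_ne_zero {M : Matrix (Fin 4) (Fin 4) kk} (hM : IsUnit M) (a : Fin 4) :
    M.adjugate a ≠ 0 := by
  intro h
  have := congrFun (congrFun (Matrix.adjugate_mul M) a) a
  rw [det_eq_one_of_isUnit hM, Matrix.mul_apply_eq_vecMul, h] at this
  simp at this

theorem exists_isUnit_adjugate_row_eq_col_eq {u v : Fin 4 → kk} (hu : u ≠ 0) (hv : v ≠ 0)
    (huv : u ⬝ᵥ v = 0) {a b : Fin 4} (hab : a ≠ b) :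
    ∃ M : Matrix (Fin 4) (Fin 4) kk, IsUnit M ∧ M.adjugate a = u ∧ ∀ j, M j b = v j := by
  obtain ⟨N, hN, hrow, hcol⟩ := exists_isUnit_row_eq_mulVec_eq_single hu hv huv hab
  have hdet := (Matrix.isUnit_iff_isUnit_det N).1 hN
  refine ⟨N⁻¹, (Matrix.isUnit_nonsing_inv_iff).2 hN, ?_, fun j => ?_⟩
  · rw [adjugate_eq_inv (Matrix.isUnit_nonsing_inv_iff.2 hN), Matrix.nonsing_inv_nonsing_inv _ hdet,
      hrow]
  · rw [← Matrix.col_apply N⁻¹ b j, ← Matrix.mulVec_single_one, ← hcol, Matrix.mulVec_mulVec,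
      Matrix.nonsing_inv_mul _ hdet, Matrix.one_mulVec]

theorem exists_isUnit_adjugate_row_eq {u : Fin 4 → kk} (hu : u ≠ 0) (a : Fin 4) :
    ∃ M : Matrix (Fin 4) (Fin 4) kk, IsUnit M ∧ M.adjugate a = u := by
  obtain ⟨v, hv, huv⟩ : ∃ v : Fin 4 → kk, v ≠ 0 ∧ u ⬝ᵥ v = 0 := by
    revert u
    decide
  obtain ⟨b, hab⟩ := exists_ne a
  obtain ⟨M, hM, hrow, -⟩ := exists_isUnit_adjugate_row_eq_col_eq hu hv huv hab.symm
  exact ⟨M, hM, hrow⟩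

end Matrices

section UpperSum

variable {ι V : Type*} [DecidableEq ι] [AddCommGroup V] [Module kk V]

theorem sum_Icc_insert_eq_zero {i : ι} {J T : Finset ι} (hT : i ∈ T) (hJ : i ∉ J)
    (F : Finset ι → V) : ∑ I ∈ Finset.Icc J T, F (insert i I) = 0 := by
  refine Finset.sum_involution (fun I _ => symmDiff I {i}) ?_ ?_ ?_ ?_
  · intro I _
    have : insert i (symmDiff I {i}) = insert i I := by grind [Finset.mem_symmDiff]
    rw [this, ZModModule.add_self]
  · intro I _ _ h
    exact Finset.singleton_ne_empty i (symmDiff_right_inj.1 (h.trans (symmDiff_bot I).symm))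
  · intro I hI
    rw [Finset.mem_Icc] at hI ⊢
    grind [Finset.mem_symmDiff]
  · intro I _
    exact symmDiff_symmDiff_cancel_right _ _

variable [Fintype ι]

/-- The sum of `F` over the supersets of `J`. -/
def upperSum (F : Finset ι → V) (J : Finset ι) : V := ∑ K ∈ Finset.Icc J Finset.univ, F K

/-- Modulo 2, summation over supersets is an involution, since the interval `[I, K]` has an even
number of elements unless `I = K`. -/
theorem sum_upperSum (F : Finset ι → V) (I : Finset ι) :
    ∑ J ∈ Finset.Icc I Finset.univ, upperSum F J = F I := by
  have swap : ∑ J ∈ Finset.Icc I Finset.univ, upperSum F J =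
      ∑ K ∈ Finset.Icc I Finset.univ, ∑ _J ∈ Finset.Icc I K, F K :=
    Finset.sum_comm' fun _ _ => by
      simp only [Finset.mem_Icc, Finset.subset_univ, and_true]
      exact ⟨fun h => ⟨h, h.1.trans h.2⟩, fun h => h.1⟩
  rw [swap, Finset.sum_eq_single I]
  · rw [Finset.Icc_self, Finset.sum_singleton]
  · intro K hK hne
    have hIK : I ⊂ K := (Finset.mem_Icc.1 hK).1.ssubset_of_ne hne.symm
    have card_even : Even (Finset.Icc I K).card := by
      rw [Finset.card_Icc_finset hIK.subset]
      exact (even_two).pow_of_ne_zero (Nat.sub_ne_zero_of_lt (Finset.card_lt_card hIK))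
    rw [Finset.sum_const, card_even.two_dvd.choose_spec, mul_nsmul, two_nsmul, ZModModule.add_self,
      nsmul_zero]
  · simp

theorem sum_sum_Icc_insert_eq_zero {F : Finset ι → ι → V} {J T : Finset ι}
    (h : ∀ I ∈ Finset.Icc J T, ∑ i, F (insert i I) i = 0) :
    ∑ i ∈ (T \ J)ᶜ, ∑ I ∈ Finset.Icc J T, F (insert i I) i = 0 := by
  have total := Finset.sum_eq_zero h
  rw [Finset.sum_comm, ← Finset.sum_add_sum_compl (T \ J), Finset.sum_eq_zero, zero_add] at total
  · exact total
  · intro i hi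
    rw [Finset.mem_sdiff] at hi
    exact sum_Icc_insert_eq_zero hi.1 hi.2 fun I => F I i

theorem sum_upperSum_eq_zero {F : Finset ι → ι → V} (h : ∀ I, ∑ i, F (insert i I) i = 0)
    (J : Finset ι) : ∑ i ∈ J, upperSum (F · i) J = 0 := by
  have sum_eq := sum_sum_Icc_insert_eq_zero (J := J) (T := Finset.univ) fun I _ => h I
  rw [← Finset.compl_eq_univ_sdiff, compl_compl] at sum_eq
  rw [← sum_eq]
  refine Finset.sum_congr rfl fun i hi => Finset.sum_congr rfl fun I hI => ?_
  rw [Finset.insert_eq_of_mem ((Finset.mem_Icc.1 hI).1 hi)]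

theorem sum_insert_univ_eq_zero {F : Finset ι → ι → V}
    (h : ∀ I ≠ Finset.univ, ∑ i, F (insert i I) i = 0) (I : Finset ι) :
    ∑ i, F (insert i I) i = 0 := by
  by_cases hI : I = Finset.univ
  · have total : ∑ I ∈ Finset.Icc ∅ Finset.univ, ∑ i, F (insert i I) i = 0 := by
      rw [Finset.sum_comm]
      exact Finset.sum_eq_zero fun i _ =>
        sum_Icc_insert_eq_zero (Finset.mem_univ i) (Finset.notMem_empty i) fun I => F I i
    rwa [Finset.sum_eq_single I (fun I' _ hne => h I' fun h => hne (h.trans hI.symm))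
      (by simp [hI])] at total
  · exact h I hI

theorem sum_insert_insert_eq_sum_insert {G : Finset ι → ι → ι → V}
    (h : ∀ I k, ∑ i, G (insert i I) i k = 0) {p q : ι} (hpq : p ≠ q) :
    ∑ A ∈ Finset.Icc ∅ {p, q}ᶜ, G (insert p (insert q A)) p q =
      ∑ A ∈ Finset.Icc ∅ {p, q}ᶜ, G (insert p A) p q := by
  have over_q := sum_sum_Icc_insert_eq_zero (J := ∅) (T := {p, q}ᶜ)
    (F := fun I i => G (insert q I) i q) fun I _ => by
      simpa only [Finset.insert_comm q] using h (insert q I) q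
  have over_empty := sum_sum_Icc_insert_eq_zero (J := ∅) (T := {p, q}ᶜ) (F := fun I i => G I i q)
    fun I _ => h I q
  rw [Finset.sdiff_empty, compl_compl, Finset.sum_pair hpq, ← ZModModule.sub_eq_add,
    sub_eq_zero] at over_q over_empty
  simp only [Finset.insert_idem] at over_q
  simp only [Finset.insert_comm p q, over_q, over_empty]

theorem apply_univ_symm {G : Finset ι → ι → ι → V} (h : ∀ I k, ∑ i, G (insert i I) i k = 0)
    (symm : ∀ I ≠ Finset.univ, ∀ j k, G I j k = G I k j) {p q : ι} (hpq : p ≠ q)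
    (mixed : ∑ A ∈ Finset.Icc ∅ {p, q}ᶜ, (G (insert p A) q p + G (insert q A) p q) = 0) :
    G Finset.univ p q = G Finset.univ q p := by
  have ne_univ : ∀ A ∈ Finset.Icc (∅ : Finset ι) {p, q}ᶜ,
      insert p A ≠ Finset.univ ∧ insert q A ≠ Finset.univ := fun A hA => by
    have hp : p ∉ A := fun h => by simpa using (Finset.mem_Icc.1 hA).2 h
    have hq : q ∉ A := fun h => by simpa using (Finset.mem_Icc.1 hA).2 h
    exact ⟨fun h => hpq (by simpa [hq] using h.ge (Finset.mem_univ q) : q = p).symm,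
      fun h => hpq (by simpa [hp] using h.ge (Finset.mem_univ p) : p = q)⟩
  have total : ∑ A ∈ Finset.Icc ∅ {p, q}ᶜ,
      (G (insert p (insert q A)) p q + G (insert q (insert p A)) q p) = 0 := by
    have swap := sum_insert_insert_eq_sum_insert h hpq.symm
    rw [Finset.pair_comm] at swap
    rw [Finset.sum_add_distrib, sum_insert_insert_eq_sum_insert h hpq, swap,
      ← Finset.sum_add_distrib, ← mixed]
    refine Finset.sum_congr rfl fun A hA => ?_
    rw [symm _ (ne_univ A hA).1, symm _ (ne_univ A hA).2]
  have off_univ : ∀ A ∈ Finset.Icc ∅ {p, q}ᶜ, A ≠ {p, q}ᶜ →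
      G (insert p (insert q A)) p q + G (insert q (insert p A)) q p = 0 := fun A hA hne => by
    rw [Finset.insert_comm q p, symm _ (fun h => hne ?_), ZModModule.add_self]
    refine (Finset.mem_Icc.1 hA).2.antisymm fun i hi => ?_
    simpa [not_or.1 (by simpa using hi)] using h.ge (Finset.mem_univ i)
  have insert_compl : insert p (insert q ({p, q}ᶜ : Finset ι)) = Finset.univ := by
    rw [← Finset.union_compl {p, q}, Finset.insert_union, Finset.singleton_union]
  rw [Finset.sum_eq_single _ off_univ (by simp), Finset.insert_comm q p, insert_compl,
    ← ZModModule.sub_eq_add, sub_eq_zero] at total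
  exact total

end UpperSum

section SquareSums

variable {ι V : Type*}

theorem sum_sum_mem {M : Type*} [AddCommMonoid M] {S : AddSubmonoid M}
    {f : ι → ι → M} (hdiag : ∀ t, f t t ∈ S) (hoff : ∀ t u, f t u + f u t ∈ S) (s : Finset ι) :
    ∑ t ∈ s, ∑ u ∈ s, f t u ∈ S := by
  classical
  induction s using Finset.induction with
  | empty => simp
  | insert a s ha ih =>
    simp only [Finset.sum_insert ha, Finset.sum_add_distrib]
    have cross : ∑ u ∈ s, f a u + ∑ t ∈ s, f t a ∈ S := by
      rw [← Finset.sum_add_distrib]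
      exact sum_mem fun u _ => hoff a u
    have regroup : f a a + ∑ u ∈ s, f a u + (∑ t ∈ s, f t a + ∑ t ∈ s, ∑ u ∈ s, f t u) =
        f a a + (∑ u ∈ s, f a u + ∑ t ∈ s, f t a) + ∑ t ∈ s, ∑ u ∈ s, f t u := by abel
    rw [regroup]
    exact add_mem (add_mem (hdiag a) cross) ih

variable [AddCommGroup V] [Module kk V]

/-- The `V`-valued form `(j, k) ↦ ∑_v v_j v_k e_v` with coefficients `e_v`, where `v` runs
over `W`. -/
def squareSum (W : Finset (ι → kk)) : ((ι → kk) → V) →ₗ[kk] ι → ι → V :=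
  LinearMap.pi fun j => LinearMap.pi fun k => ∑ v ∈ W, (v j * v k) • LinearMap.proj v

theorem squareSum_apply (W : Finset (ι → kk)) (e : (ι → kk) → V) (j k : ι) :
    squareSum W e j k = ∑ v ∈ W, (v j * v k) • e v := by
  simp [squareSum]

theorem square_mem_range_squareSum [Finite ι] {W : Finset (ι → kk)} {v : ι → kk}
    (hv : v ≠ 0 → v ∈ W) (x : V) :
    (fun j k => (v j * v k) • x) ∈ LinearMap.range (squareSum (V := V) W) := by
  classical
  rcases eq_or_ne v 0 with rfl | hne
  · simp only [Pi.zero_apply, mul_zero, zero_smul]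
    exact zero_mem (LinearMap.range (squareSum W))
  refine ⟨Pi.single v x, ?_⟩
  funext j k
  rw [squareSum_apply, Finset.sum_eq_single v _ fun h => absurd (hv hne) h, Pi.single_eq_same]
  intro u _ hu
  rw [Pi.single_eq_of_ne hu, smul_zero]

variable [DecidableEq ι]

/-- The image of the `t`-th basis vector under the projection to the hyperplane `∑_{i ∈ J} v_i = 0`
along the `a`-th basis vector, for `a ∈ J`. -/
def hyperplaneProj (J : Finset ι) (a t : ι) : ι → kk :=
  Pi.single t 1 + if t ∈ J then Pi.single a 1 else 0

theorem sum_hyperplaneProj {J : Finset ι} {a : ι} (ha : a ∈ J) (t : ι) :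
    ∑ i ∈ J, hyperplaneProj J a t i = 0 := by
  have total : ∑ i ∈ J, hyperplaneProj J a t i =
      (if t ∈ J then 1 else 0) + if t ∈ J then 1 else 0 := by
    by_cases ht : t ∈ J <;>
      simp [hyperplaneProj, Finset.sum_add_distrib, Pi.single_apply, ht, ha]
  rw [total, CharTwo.add_self_eq_zero]

theorem sum_hyperplaneProj_smul [Fintype ι] {J : Finset ι} {x : ι → V} (hx : ∑ i ∈ J, x i = 0)
    (a j : ι) : ∑ t, hyperplaneProj J a t j • x t = x j := by
  have term : ∀ t, hyperplaneProj J a t j • x t =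
      (if t = j then x t else 0) + if t ∈ J then (if j = a then x t else 0) else 0 := fun t => by
    by_cases ht : t ∈ J <;>
      simp [hyperplaneProj, Pi.single_apply, ht, add_smul, eq_comm (a := t)]
  simp only [term, Finset.sum_add_distrib, Finset.sum_ite_mem, Finset.univ_inter]
  by_cases hj : j = a <;> simp [hj, hx]

/-- A symmetric form that vanishes on the indicator of `J` is a symmetric tensor over the hyperplane
`∑_{i ∈ J} v_i = 0`, and there `v ⊗ w + w ⊗ v = (v + w) ⊗ (v + w) - v ⊗ v - w ⊗ w`. -/
theorem exists_eq_sum_square [Fintype ι] {J : Finset ι} (hJ : J.Nonempty) {B : ι → ι → V}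
    (symm : ∀ j k, B j k = B k j) (h : ∀ k, ∑ i ∈ J, B i k = 0) :
    ∃ e : (ι → kk) → V, ∀ j k,
      B j k = ∑ v ∈ Finset.univ.filter fun v : ι → kk => v ≠ 0 ∧ ∑ i ∈ J, v i = 0,
        (v j * v k) • e v := by
  obtain ⟨a, ha⟩ := hJ
  set W := Finset.univ.filter fun v : ι → kk => v ≠ 0 ∧ ∑ i ∈ J, v i = 0
  set w := hyperplaneProj J a
  set f : ι → ι → ι → ι → V := fun t u j k => (w t j * w u k) • B t u
  suffices mem : B ∈ LinearMap.range (squareSum (V := V) W) by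
    obtain ⟨e, rfl⟩ := mem
    exact ⟨e, squareSum_apply W e⟩
  have expansion : B = ∑ t, ∑ u, f t u := by
    funext j k
    simp only [f, Finset.sum_apply, mul_smul, ← Finset.smul_sum]
    rw [← sum_hyperplaneProj_smul (h k) a j]
    refine Finset.sum_congr rfl fun t _ => congrArg _ ?_
    refine (sum_hyperplaneProj_smul (x := B t) ?_ a k).symm
    simpa only [symm t] using h t
  have square_mem : ∀ v : ι → kk, ∑ i ∈ J, v i = 0 → ∀ x,
      (fun j k => (v j * v k) • x) ∈ LinearMap.range (squareSum (V := V) W) := fun v hv x =>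
    square_mem_range_squareSum (fun hne => by simp [W, hne, hv]) x
  have hw : ∀ t, ∑ i ∈ J, w t i = 0 := sum_hyperplaneProj ha
  rw [expansion]
  refine sum_sum_mem (S := (LinearMap.range (squareSum W)).toAddSubmonoid) (fun t => ?_)
    (fun t u => ?_) Finset.univ
  · exact square_mem _ (hw t) (B t t)
  · have polar : f t u + f u t = (fun j k => ((w t + w u) j * (w t + w u) k) • B t u) -
        (fun j k => (w t j * w t k) • B t u) - fun j k => (w u j * w u k) • B t u := by
      funext j k
      simp only [f, Pi.add_apply, Pi.sub_apply, symm u t]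
      module
    rw [polar]
    refine Submodule.sub_mem _ (Submodule.sub_mem _ (square_mem _ ?_ _) (square_mem _ (hw t) _))
      (square_mem _ (hw u) _)
    simp only [Pi.add_apply, Finset.sum_add_distrib, hw, add_zero]

end SquareSums

section ReadingOff

/-- The indicator vector of `J`. -/
def indicatorVec (J : Finset (Fin 4)) (i : Fin 4) : kk := if i ∈ J then 1 else 0

theorem indicatorVec_ne_zero {J : Finset (Fin 4)} (hJ : J.Nonempty) : indicatorVec J ≠ 0 := by
  obtain ⟨i, hi⟩ := hJ
  exact Function.ne_iff.2 ⟨i, by simp [indicatorVec, hi]⟩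

theorem prod_map_indicatorVec (J : Finset (Fin 4)) (L : List (Fin 4)) :
    (L.map (indicatorVec J)).prod = if L.toFinset ⊆ J then 1 else 0 := by
  induction L with
  | nil => simp
  | cons i L ih =>
    rw [List.map_cons, List.prod_cons, ih, List.toFinset_cons, indicatorVec]
    simp only [Finset.insert_subset_iff]
    split_ifs <;> simp_all

theorem sum_prod_map_indicatorVec_smul_upperSum {V : Type*} [AddCommGroup V] [Module kk V]
    {L : List (Fin 4)} (hL : L ≠ []) (F : Finset (Fin 4) → V) :
    ∑ J with J.Nonempty, (L.map (indicatorVec J)).prod • upperSum F J = F L.toFinset := by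
  have filter_eq : (Finset.univ.filter Finset.Nonempty).filter (L.toFinset ⊆ ·) =
      Finset.Icc L.toFinset Finset.univ := by
    ext J
    simp only [Finset.mem_filter, Finset.mem_univ, true_and, Finset.mem_Icc, Finset.subset_univ,
      and_true, and_iff_right_iff_imp]
    exact (List.toFinset_nonempty_iff L |>.2 hL).mono
  simp only [prod_map_indicatorVec, ite_smul, one_smul, zero_smul]
  rw [← Finset.sum_filter, filter_eq, sum_upperSum]

end ReadingOff

section AllThrees

theorem wv_zero_exp : wv 0 = 0 := by
  funext j
  simp [wv]

theorem eq_zero_of_wv_eq_zero {d : Fin 4 →₀ ℕ} (h : wv d = 0) : d = 0 := by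
  ext i
  refine Nat.eq_of_testBit_eq fun j => ?_
  have hj : d i / 2 ^ j % 2 = 0 := Finset.sum_eq_zero_iff.1 (congrFun h j) i (Finset.mem_univ i)
  simp [Nat.testBit_eq_decide_div_mod_eq, hj]

theorem isTestExp_zero : IsTestExp 0 0 where
  apply_zero := rfl
  spike _ := ⟨0, rfl⟩
  substCoeff_eq_zero M := by
    suffices h : lower 0 ≤ LinearMap.ker (substCoeff M 0) from fun f hf => h hf
    exact restrictSupport_le fun d ⟨_, _, hj⟩ => absurd hj (Nat.not_lt_zero _)

theorem substCoeff_upWord_one (M : Matrix (Fin 4) (Fin 4) kk) (L : List (Fin 4)) :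
    substCoeff M ((upExp 0)^[L.length] 0) (upWord L 1) = (L.map (M.adjugate 0)).prod := by
  rw [substCoeff_upWord, substCoeff_apply, map_one, coeff_zero_one, mul_one]

theorem weightClass_eq_sum_substCoeff_smul {n : ℕ} (hn : n ≠ 0)
    {M : Finset (Fin 4) → Matrix (Fin 4) (Fin 4) kk}
    (hM : ∀ J : Finset (Fin 4), J.Nonempty → (M J).adjugate 0 = indicatorVec J) {f : P4}
    (hf : f ∈ restrictSupport kk {d | wLe (wv d) (consThree^[n] 0)}) :
    weightClass (consThree^[n] 0) f = ∑ J with J.Nonempty,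
      substCoeff (M J) ((upExp 0)^[n] 0) f • upperSum (fun I => setClass 0 n I 1) J := by
  set readOff : P4 →ₗ[kk] P4 ⧸ hitsOrLower (consThree^[n] 0) := ∑ J with J.Nonempty,
    (substCoeff (M J) ((upExp 0)^[n] 0)).smulRight (upperSum (fun I => setClass 0 n I 1) J)
  have readOff_apply (g : P4) : readOff g = ∑ J with J.Nonempty,
      substCoeff (M J) ((upExp 0)^[n] 0) g • upperSum (fun I => setClass 0 n I 1) J := by
    simp [readOff]
  rw [← readOff_apply]
  refine eqOn_restrictSupport_of_eq_upWord
    (fun g hg => weightClass_eq_zero_iff.2 (Submodule.mem_sup_right hg)) (fun g hg => ?_)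
    (fun L d hL hd => ?_) hf
  · rw [readOff_apply]
    refine Finset.sum_eq_zero fun J _ => ?_
    rw [(isTestExp_zero.iterate n).substCoeff_eq_zero _ g hg, zero_smul]
  · obtain rfl := eq_zero_of_wv_eq_zero hd
    subst hL
    rw [monomial_zero', C_1, ← setClass_apply 0 rfl rfl, readOff_apply]
    refine (sum_prod_map_indicatorVec_smul_upperSum (List.ne_nil_of_length_pos hn.bot_lt)
      fun I => setClass 0 L.length I 1).symm.trans (Finset.sum_congr rfl fun J hJ => ?_)
    rw [substCoeff_upWord_one, hM J (Finset.mem_filter.1 hJ).2]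

/-- Reading the coefficient of a spike after all invertible substitutions determines a polynomial
modulo hits, because the matrices whose adjugate has an indicator vector as its first row recover
the class attached to every set of letters by Möbius inversion. -/
theorem mem_hitsOrLower_of_forall_substCoeff_eq_zero {n : ℕ} (hn : n ≠ 0) {f : P4}
    (hf : f ∈ restrictSupport kk {d | wLe (wv d) (consThree^[n] 0)})
    (h : ∀ M, IsUnit M → substCoeff M ((upExp 0)^[n] 0) f = 0) :
    f ∈ hitsOrLower (consThree^[n] 0) := by
  have exists_matrix (J : Finset (Fin 4)) : ∃ M : Matrix (Fin 4) (Fin 4) kk,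
      J.Nonempty → IsUnit M ∧ M.adjugate 0 = indicatorVec J := by
    by_cases hJ : J.Nonempty
    · obtain ⟨M, hM⟩ := exists_isUnit_adjugate_row_eq (indicatorVec_ne_zero hJ) 0
      exact ⟨M, fun _ => hM⟩
    · exact ⟨0, fun h => absurd h hJ⟩
  choose M hM using exists_matrix
  rw [← weightClass_eq_zero_iff, weightClass_eq_sum_substCoeff_smul hn (fun J hJ => (hM J hJ).2) hf]
  refine Finset.sum_eq_zero fun J hJ => ?_
  rw [h _ (hM J (Finset.mem_filter.1 hJ).2).1, zero_smul]

end AllThrees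

section ZetaStar

theorem up_pow_one (i : Fin 4) (k : ℕ) : (up i ^ k) 1 = omitVar i ^ (2 ^ k - 1) := by
  induction k with
  | zero => simp
  | succ k ih =>
    have := Nat.one_le_two_pow (n := k)
    rw [pow_succ', Module.End.mul_apply, ih, up_apply, ← pow_mul, ← pow_succ']
    congr 1
    rw [pow_succ]
    omega

theorem omitVar_eq (i : Fin 4) :
    omitVar i = ![X 1 * X 2 * X 3, X 0 * X 2 * X 3, X 0 * X 1 * X 3, X 0 * X 1 * X 2] i := by
  rw [omitVar, ← Finset.filter_ne', Finset.prod_filter, Fin.prod_univ_four]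
  fin_cases i <;> simp

/-- For every nonempty set of letters, the word of length `r + 4` in which its least letter is
repeated at the end. -/
def zetaWords (r : ℕ) : List (List (Fin 4)) :=
  [List.replicate (r + 4) 0, List.replicate (r + 4) 1, List.replicate (r + 4) 2,
    List.replicate (r + 4) 3, 1 :: List.replicate (r + 3) 0, 2 :: List.replicate (r + 3) 0,
    3 :: List.replicate (r + 3) 0, 2 :: List.replicate (r + 3) 1, 3 :: List.replicate (r + 3) 1,
    3 :: List.replicate (r + 3) 2, 2 :: 1 :: List.replicate (r + 2) 0,
    3 :: 1 :: List.replicate (r + 2) 0, 3 :: 2 :: List.replicate (r + 2) 0,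
    3 :: 2 :: List.replicate (r + 2) 1, 3 :: 2 :: 1 :: List.replicate (r + 1) 0]

theorem length_of_mem_zetaWords {r : ℕ} {L : List (Fin 4)} (h : L ∈ zetaWords r) :
    L.length = r + 4 := by
  have : ∀ L ∈ zetaWords r, L.length = r + 4 := by simp [zetaWords]
  exact this L h

theorem zetaStar_eq_sum_upWord (r : ℕ) :
    zetaStar (2 ^ (r + 4)) = ((zetaWords r).map fun L => upWord L 1).sum := by
  obtain ⟨t, ht⟩ : ∃ t, 2 ^ (r + 1) = t + 1 :=
    ⟨2 ^ (r + 1) - 1, by have := Nat.one_le_two_pow (n := r + 1); omega⟩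
  have pow_two : 2 ^ (r + 2) = 2 * t + 2 := by rw [pow_succ, ht]; ring
  have pow_three : 2 ^ (r + 3) = 4 * t + 4 := by rw [pow_succ, pow_two]; ring
  have pow_four : 2 ^ (r + 4) = 8 * t + 8 := by rw [pow_succ, pow_three]; ring
  simp only [zetaWords, List.map_cons, List.map_nil, List.sum_cons, List.sum_nil, upWord_cons,
    Module.End.mul_apply, upWord_replicate, up_pow_one, up_apply, ht, pow_two, pow_three, pow_four,
    zetaStar, omitVar_eq, Nat.add_sub_cancel, Nat.reduceSubDiff, Matrix.cons_val]
  ring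

theorem prod_map_eq_prod_toFinset {ι : Type*} [DecidableEq ι] (u : ι → kk) (L : List ι) :
    (L.map u).prod = ∏ i ∈ L.toFinset, u i := by
  induction L with
  | nil => simp
  | cons i L ih =>
    have idem : ∀ x : kk, x * x = x := by decide
    rw [List.map_cons, List.prod_cons, ih, List.toFinset_cons]
    by_cases hi : i ∈ L.toFinset
    · rw [Finset.insert_eq_of_mem hi, ← Finset.mul_prod_erase _ u hi, ← mul_assoc, idem]
    · rw [Finset.prod_insert hi]

theorem sum_zetaWords_prod_eq_one (r : ℕ) {u : Fin 4 → kk} (hu : u ≠ 0) :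
    ((zetaWords r).map fun L => (L.map u).prod).sum = 1 := by
  simp only [prod_map_eq_prod_toFinset, zetaWords, List.map_cons, List.map_nil, List.toFinset_cons,
    List.toFinset_replicate_of_ne_zero (Nat.succ_ne_zero _)]
  revert u
  decide

theorem substCoeff_zetaStar {M : Matrix (Fin 4) (Fin 4) kk} (hM : IsUnit M) (r : ℕ) :
    substCoeff M ((upExp 0)^[r + 4] 0) (zetaStar (2 ^ (r + 4))) = 1 := by
  rw [zetaStar_eq_sum_upWord, map_list_sum, List.map_map,
    ← sum_zetaWords_prod_eq_one r (adjugate_row_ne_zero hM 0)]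
  refine congrArg List.sum (List.map_congr_left fun L hL => ?_)
  rw [← length_of_mem_zetaWords hL, Function.comp_apply, substCoeff_upWord_one]

end ZetaStar

section PairWeight

/-- The weight vector `(1, 1, 0, 0, …)` of the monomials `x_j x_k²`. -/
def pairWeight (j : ℕ) : ℕ := if j < 2 then 1 else 0

theorem exists_eq_single_of_degree_eq_one {d : Fin 4 →₀ ℕ} (h : d.degree = 1) :
    ∃ i, d = Finsupp.single i 1 :=
  (Finsupp.sum_eq_one_iff d).1 h

theorem exists_monomial_eq_X_mul_X_sq {d : Fin 4 →₀ ℕ} (h : wv d = pairWeight) :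
    ∃ j k, monomial d (1 : kk) = X j * X k ^ 2 := by
  obtain ⟨ε, d, rfl, hε, hd⟩ := exists_eq_add_two_nsmul d
  obtain ⟨ε', d, rfl, hε', hd'⟩ := exists_eq_add_two_nsmul d
  rw [h] at hε
  rw [← hd 0, h] at hε'
  obtain ⟨j, rfl⟩ := exists_eq_single_of_degree_eq_one hε
  obtain ⟨k, rfl⟩ := exists_eq_single_of_degree_eq_one hε'
  obtain rfl : d = 0 := eq_zero_of_wv_eq_zero <| funext fun i => by
    rw [← hd', ← hd, h]
    rfl
  refine ⟨j, k, ?_⟩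
  rw [smul_zero, add_zero, X, X, monomial_pow, monomial_mul, one_pow, one_mul]

theorem degree_ne_three_of_wLt_pairWeight {d : Fin 4 →₀ ℕ} (h : wLt (wv d) pairWeight) :
    d.degree ≠ 3 := by
  obtain ⟨ε, d, rfl, hε, hd⟩ := exists_eq_add_two_nsmul d
  obtain ⟨ε', d, rfl, hε', -⟩ := exists_eq_add_two_nsmul d
  simp only [map_add, map_nsmul, smul_eq_mul, hε, hε', ← hd 0]
  obtain ⟨_ | _ | j, agree, hj⟩ := h
  · have : wv (ε + 2 • (ε' + 2 • d)) 0 < 1 := hj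
    omega
  · have h0 : wv (ε + 2 • (ε' + 2 • d)) 0 = 1 := agree 0 one_pos
    have h1 : wv (ε + 2 • (ε' + 2 • d)) 1 < 1 := hj
    rw [zero_add]
    omega
  · exact absurd hj (Nat.not_lt_zero _)

theorem isTestExp_single_three : IsTestExp pairWeight (Finsupp.single 3 3) where
  apply_zero := Finsupp.single_eq_of_ne (by decide)
  spike i := by
    rcases eq_or_ne i 3 with rfl | hi
    · exact ⟨2, by rw [Finsupp.single_eq_same]; rfl⟩
    · exact ⟨0, by rw [Finsupp.single_eq_of_ne hi]; rfl⟩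
  substCoeff_eq_zero M := by
    suffices h : lower pairWeight ≤ LinearMap.ker (substCoeff M (Finsupp.single 3 3)) from
      fun f hf => h hf
    refine restrictSupport_le fun d hd => substCoeff_monomial_of_degree_ne M ?_
    rw [Finsupp.degree_single]
    exact degree_ne_three_of_wLt_pairWeight hd

theorem substCoeff_X_mul_X_sq (M : Matrix (Fin 4) (Fin 4) kk) (j k : Fin 4) :
    substCoeff M (Finsupp.single 3 3) (X j * X k ^ 2) = M j 3 * M k 3 := by
  have coeff_row (i : Fin 4) : coeff (Finsupp.single 3 1) (substM M (X i)) = M i 3 := by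
    simp [substM_X, coeff_sum, coeff_X, Finsupp.single_left_inj]
  have exp_eq : (Finsupp.single 3 3 : Fin 4 →₀ ℕ) =
      Finsupp.single 3 1 + 2 • Finsupp.single 3 1 := by
    rw [Finsupp.smul_single, ← Finsupp.single_add]
    rfl
  rw [substCoeff_apply, map_mul, map_pow, exp_eq,
    coeff_add_two_nsmul_mul_sq (isHomogeneous_substM M (isHomogeneous_X kk j)) (fun i => ?_)
      (Finsupp.degree_single _ _).ge, coeff_row, coeff_row]
  rw [Finsupp.single_apply]
  split_ifs <;> omega

end PairWeight

section CubicClass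

/-- The class of `upWord L (x_j x_k²)` for a word `L` of length `n` with set of letters `I`. For
`I = univ` it is given by the expression that the relation `sum_setClass_insert_X_mul` dictates,
which also makes sense for `n = 3`, when no such `L` exists. -/
def cubicClass (b : ℕ → ℕ) (n : ℕ) (I : Finset (Fin 4)) (j k : Fin 4) :
    P4 ⧸ hitsOrLower (consThree^[n] b) :=
  if I = Finset.univ then
    ∑ i ∈ Finset.univ.erase j, setClass b n (Finset.univ.erase j) (X i * X k ^ 2)
  else setClass b n I (X j * X k ^ 2)

variable (b : ℕ → ℕ) {n : ℕ}

theorem cubicClass_of_ne_univ {I : Finset (Fin 4)} (hI : I ≠ Finset.univ) (j k : Fin 4) :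
    cubicClass b n I j k = setClass b n I (X j * X k ^ 2) :=
  if_neg hI

theorem weightClass_upWord_X_mul_X_sq {L : List (Fin 4)} (hL : L.length = n) (j k : Fin 4) :
    weightClass (consThree^[n] b) (upWord L (X j * X k ^ 2)) =
      cubicClass b n L.toFinset j k := by
  rw [← setClass_apply b hL rfl]
  by_cases hI : L.toFinset = Finset.univ
  · have card_erase : (Finset.univ.erase j).card < n := by
      have := L.toFinset_card_le
      rw [hI, hL, Finset.card_univ, Fintype.card_fin] at this
      rw [Finset.card_erase_of_mem (Finset.mem_univ j), Finset.card_univ, Fintype.card_fin]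
      omega
    have relation := sum_setClass_insert_X_mul b card_erase (X k ^ 2)
    rw [← Finset.add_sum_erase _ _ (Finset.mem_univ j), Finset.insert_erase (Finset.mem_univ j),
      ← ZModModule.sub_eq_add, sub_eq_zero] at relation
    rw [cubicClass, if_pos hI, hI, relation]
    exact Finset.sum_congr rfl fun i hi => by rw [Finset.insert_eq_of_mem hi]
  · rw [cubicClass_of_ne_univ b hI]

theorem sum_cubicClass_insert (hn : 3 ≤ n) (I : Finset (Fin 4)) (k : Fin 4) :
    ∑ i, cubicClass b n (insert i I) i k = 0 := by
  refine sum_insert_univ_eq_zero (F := fun I i => cubicClass b n I i k) (fun I hI => ?_) I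
  by_cases hcover : ∃ j, insert j I = Finset.univ
  · obtain ⟨j, hj⟩ := hcover
    have hjI : j ∉ I := fun h => hI (by rwa [Finset.insert_eq_of_mem h] at hj)
    obtain rfl : I = Finset.univ.erase j := by rw [← hj, Finset.erase_insert hjI]
    rw [← Finset.add_sum_erase _ _ (Finset.mem_univ j), hj, cubicClass, if_pos rfl,
      ← ZModModule.sub_eq_add, sub_eq_zero]
    refine Finset.sum_congr rfl fun i hi => ?_
    rw [Finset.insert_eq_of_mem hi, cubicClass_of_ne_univ b hI]
  · push Not at hcover
    simp only [cubicClass_of_ne_univ b (hcover _)]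
    refine sum_setClass_insert_X_mul b (lt_of_lt_of_le ?_ hn) _
    obtain ⟨j, hj⟩ : ∃ j, j ∉ I := by simpa [Finset.eq_univ_iff_forall] using hI
    have := Finset.card_lt_card (Finset.ssubset_univ_iff.2 (hcover j))
    rw [Finset.card_insert_of_notMem hj] at this
    exact Nat.lt_of_succ_lt_succ this

theorem setClass_X_mul_X_sq_symm (I : Finset (Fin 4)) (j k : Fin 4) :
    setClass b n I (X j * X k ^ 2) = setClass b n I (X k * X j ^ 2) := by
  have leibniz : sqOne (X j * X k) = X j * X k ^ 2 - X k * X j ^ 2 := by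
    rw [Derivation.leibniz, sqOne_X, sqOne_X, smul_eq_mul, smul_eq_mul, CharTwo.sub_eq_add]
  rw [← sub_eq_zero, ← map_sub, ← leibniz]
  exact setClass_eq_zero (Submodule.mem_sup_left (sqOne_mem_hits _)) n I

theorem cubicClass_symm (hn : 3 ≤ n) (I : Finset (Fin 4)) (j k : Fin 4) :
    cubicClass b n I j k = cubicClass b n I k j := by
  have symm : ∀ I ≠ Finset.univ, ∀ j k, cubicClass b n I j k = cubicClass b n I k j :=
    fun I hI j k => by
      rw [cubicClass_of_ne_univ b hI, cubicClass_of_ne_univ b hI, setClass_X_mul_X_sq_symm]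
  by_cases hI : I = Finset.univ
  swap
  · exact symm I hI j k
  rcases eq_or_ne j k with rfl | hjk
  · rfl
  rw [hI]
  refine apply_univ_symm (fun I k => sum_cubicClass_insert b hn I k) symm hjk ?_
  have card_pair_compl : ({j, k}ᶜ : Finset (Fin 4)).card = 2 := by
    rw [Finset.card_compl, Finset.card_pair hjk, Fintype.card_fin]
  have card_le : ∀ A ∈ Finset.Icc (∅ : Finset (Fin 4)) {j, k}ᶜ, A.card ≤ 2 := fun A hA =>
    (Finset.card_le_card (Finset.mem_Icc.1 hA).2).trans card_pair_compl.le
  have mixed := sum_sum_Icc_insert_eq_zero (J := ∅) (T := {j, k}ᶜ)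
    (F := fun I i => setClass b n I (X i * (X j * X k))) fun A hA =>
      sum_setClass_insert_X_mul b (by have := card_le A hA; omega) (X j * X k)
  rw [Finset.sdiff_empty, compl_compl, Finset.sum_pair hjk, ← Finset.sum_add_distrib] at mixed
  rw [← mixed]
  refine Finset.sum_congr rfl fun A hA => ?_
  have insert_ne (i : Fin 4) : insert i A ≠ Finset.univ := fun h => by
    have := (Finset.card_insert_le i A).trans (Nat.succ_le_succ (card_le A hA))
    rw [h] at this
    exact absurd this (by decide)
  rw [cubicClass_of_ne_univ b (insert_ne j), cubicClass_of_ne_univ b (insert_ne k)]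
  congr 2 <;> ring

end CubicClass

section ThreesOneOne

/-- The nonzero vectors whose entries indexed by `J` sum to zero. For an invertible matrix whose
adjugate has `indicatorVec J` as row `0`, these are the possible columns `3`. -/
def hyperplaneVecs (J : Finset (Fin 4)) : Finset (Fin 4 → kk) :=
  Finset.univ.filter fun v => v ≠ 0 ∧ ∑ i ∈ J, v i = 0

theorem exists_upperSum_cubicClass_eq (b : ℕ → ℕ) {n : ℕ} (hn : 3 ≤ n) {J : Finset (Fin 4)}
    (hJ : J.Nonempty) : ∃ e : (Fin 4 → kk) → P4 ⧸ hitsOrLower (consThree^[n] b), ∀ j k,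
      upperSum (fun I => cubicClass b n I j k) J = ∑ v ∈ hyperplaneVecs J, (v j * v k) • e v := by
  refine exists_eq_sum_square hJ (B := fun j k => upperSum (fun I => cubicClass b n I j k) J)
    (fun j k => ?_) fun k => ?_
  · simp only [cubicClass_symm b hn _ j k]
  · exact sum_upperSum_eq_zero (F := fun I i => cubicClass b n I i k)
      (fun I => sum_cubicClass_insert b hn I k) J

theorem exists_isUnit_adjugate_row_eq_indicatorVec {J : Finset (Fin 4)} (hJ : J.Nonempty)
    {v : Fin 4 → kk} (hv : v ∈ hyperplaneVecs J) :
    ∃ M : Matrix (Fin 4) (Fin 4) kk,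
      IsUnit M ∧ M.adjugate 0 = indicatorVec J ∧ ∀ j, M j 3 = v j := by
  obtain ⟨-, hv0, hsum⟩ := Finset.mem_filter.1 hv
  refine exists_isUnit_adjugate_row_eq_col_eq (indicatorVec_ne_zero hJ) hv0 ?_ (by decide)
  simpa [dotProduct, indicatorVec] using hsum

theorem eqOn_restrictSupport_of_eq_upWord_X_mul_X_sq {V : Type*} [AddCommGroup V] [Module kk V]
    {n : ℕ} {φ ψ : P4 →ₗ[kk] V} (hφ : ∀ f ∈ lower (consThree^[n] pairWeight), φ f = 0)
    (hψ : ∀ f ∈ lower (consThree^[n] pairWeight), ψ f = 0)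
    (h : ∀ L j k, L.length = n → φ (upWord L (X j * X k ^ 2)) = ψ (upWord L (X j * X k ^ 2))) :
    Set.EqOn φ ψ (restrictSupport kk {d | wLe (wv d) (consThree^[n] pairWeight)}) := by
  refine eqOn_restrictSupport_of_eq_upWord hφ hψ fun L d hL hd => ?_
  obtain ⟨j, k, hjk⟩ := exists_monomial_eq_X_mul_X_sq hd
  rw [hjk, h L j k hL]

theorem substCoeff_upWord_X_mul_X_sq (M : Matrix (Fin 4) (Fin 4) kk) (L : List (Fin 4))
    (j k : Fin 4) :
    substCoeff M ((upExp 0)^[L.length] (Finsupp.single 3 3)) (upWord L (X j * X k ^ 2)) =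
      (L.map (M.adjugate 0)).prod * (M j 3 * M k 3) := by
  rw [substCoeff_upWord, substCoeff_X_mul_X_sq]

theorem weightClass_eq_sum_sum_substCoeff_smul {n : ℕ} (hn : n ≠ 0)
    {M : Finset (Fin 4) → (Fin 4 → kk) → Matrix (Fin 4) (Fin 4) kk}
    (hM : ∀ J : Finset (Fin 4), J.Nonempty → ∀ v ∈ hyperplaneVecs J,
      (M J v).adjugate 0 = indicatorVec J ∧ ∀ j, M J v j 3 = v j)
    {e : Finset (Fin 4) → (Fin 4 → kk) → P4 ⧸ hitsOrLower (consThree^[n] pairWeight)}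
    (he : ∀ J : Finset (Fin 4), J.Nonempty → ∀ j k,
      upperSum (fun I => cubicClass pairWeight n I j k) J =
        ∑ v ∈ hyperplaneVecs J, (v j * v k) • e J v)
    {f : P4} (hf : f ∈ restrictSupport kk {d | wLe (wv d) (consThree^[n] pairWeight)}) :
    weightClass (consThree^[n] pairWeight) f = ∑ J with J.Nonempty, ∑ v ∈ hyperplaneVecs J,
      substCoeff (M J v) ((upExp 0)^[n] (Finsupp.single 3 3)) f • e J v := by
  set readOff : P4 →ₗ[kk] P4 ⧸ hitsOrLower (consThree^[n] pairWeight) :=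
    ∑ J with J.Nonempty, ∑ v ∈ hyperplaneVecs J,
      (substCoeff (M J v) ((upExp 0)^[n] (Finsupp.single 3 3))).smulRight (e J v)
  have readOff_apply (g : P4) : readOff g = ∑ J with J.Nonempty, ∑ v ∈ hyperplaneVecs J,
      substCoeff (M J v) ((upExp 0)^[n] (Finsupp.single 3 3)) g • e J v := by
    simp [readOff]
  rw [← readOff_apply]
  refine eqOn_restrictSupport_of_eq_upWord_X_mul_X_sq
    (fun g hg => weightClass_eq_zero_iff.2 (Submodule.mem_sup_right hg)) (fun g hg => ?_)
    (fun L j k hL => ?_) hf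
  · rw [readOff_apply]
    refine Finset.sum_eq_zero fun J _ => Finset.sum_eq_zero fun v _ => ?_
    rw [(isTestExp_single_three.iterate n).substCoeff_eq_zero _ g hg, zero_smul]
  · subst hL
    rw [weightClass_upWord_X_mul_X_sq pairWeight rfl, readOff_apply]
    refine (sum_prod_map_indicatorVec_smul_upperSum (List.ne_nil_of_length_pos hn.bot_lt)
      fun I => cubicClass pairWeight L.length I j k).symm.trans
        (Finset.sum_congr rfl fun J hJ => ?_)
    have hJ := (Finset.mem_filter.1 hJ).2
    rw [he J hJ, Finset.smul_sum]
    refine Finset.sum_congr rfl fun v hv => ?_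
    obtain ⟨hrow, hcol⟩ := hM J hJ v hv
    rw [substCoeff_upWord_X_mul_X_sq, hrow, hcol, hcol, smul_smul]

theorem mem_hitsOrLower_pairWeight_of_forall_substCoeff_eq_zero {n : ℕ} (hn : 3 ≤ n) {f : P4}
    (hf : f ∈ restrictSupport kk {d | wLe (wv d) (consThree^[n] pairWeight)})
    (h : ∀ M, IsUnit M → substCoeff M ((upExp 0)^[n] (Finsupp.single 3 3)) f = 0) :
    f ∈ hitsOrLower (consThree^[n] pairWeight) := by
  choose! e he using fun (J : Finset (Fin 4)) (hJ : J.Nonempty) =>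
    exists_upperSum_cubicClass_eq pairWeight hn hJ
  choose! M isUnit_M hM using fun (J : Finset (Fin 4)) (hJ : J.Nonempty) (v : Fin 4 → kk)
    (hv : v ∈ hyperplaneVecs J) => exists_isUnit_adjugate_row_eq_indicatorVec hJ hv
  rw [← weightClass_eq_zero_iff, weightClass_eq_sum_sum_substCoeff_smul (by omega) hM he hf]
  refine Finset.sum_eq_zero fun J hJ => Finset.sum_eq_zero fun v hv => ?_
  rw [h _ (isUnit_M J (Finset.mem_filter.1 hJ).2 v hv), zero_smul]

theorem sum_substCoeff_eq_zero {n : ℕ} {M : (Fin 4 → kk) → Matrix (Fin 4) (Fin 4) kk}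
    (hM : ∀ v ∈ hyperplaneVecs {0},
      (M v).adjugate 0 = indicatorVec {0} ∧ ∀ j, M v j 3 = v j)
    {f : P4} (hf : f ∈ restrictSupport kk {d | wLe (wv d) (consThree^[n] pairWeight)}) :
    ∑ v ∈ hyperplaneVecs {0}, substCoeff (M v) ((upExp 0)^[n] (Finsupp.single 3 3)) f = 0 := by
  have sum_mul (j k : Fin 4) : ∑ v ∈ hyperplaneVecs {0}, v j * v k = 0 := by
    revert j k
    decide
  rw [← LinearMap.sum_apply]
  refine eqOn_restrictSupport_of_eq_upWord_X_mul_X_sq (ψ := 0) (fun g hg => ?_) (fun _ _ => rfl)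
    (fun L j k hL => ?_) hf
  · rw [LinearMap.sum_apply]
    exact Finset.sum_eq_zero fun v _ => (isTestExp_single_three.iterate n).substCoeff_eq_zero _ g hg
  · subst hL
    rw [LinearMap.sum_apply, LinearMap.zero_apply, ← mul_zero (L.map (indicatorVec {0})).prod,
      ← sum_mul j k, Finset.mul_sum]
    refine Finset.sum_congr rfl fun v hv => ?_
    obtain ⟨hrow, hcol⟩ := hM v hv
    rw [substCoeff_upWord_X_mul_X_sq, hrow, hcol, hcol]

/-- An invariant class is zero, because the seven coefficients read off by the matrices attached to
the vectors of `hyperplaneVecs {0}` sum to zero; being equal, they vanish. -/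
theorem mem_hitsOrLower_of_forall_substCoeff_eq {n : ℕ} (hn : 3 ≤ n) {f : P4} {c : kk}
    (hf : f ∈ restrictSupport kk {d | wLe (wv d) (consThree^[n] pairWeight)})
    (h : ∀ M, IsUnit M → substCoeff M ((upExp 0)^[n] (Finsupp.single 3 3)) f = c) :
    f ∈ hitsOrLower (consThree^[n] pairWeight) := by
  choose! M isUnit_M hM using fun (v : Fin 4 → kk) (hv : v ∈ hyperplaneVecs {0}) =>
    exists_isUnit_adjugate_row_eq_indicatorVec (Finset.singleton_nonempty 0) hv
  have sum_eq := sum_substCoeff_eq_zero hM hf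
  have card_eq : (hyperplaneVecs {0}).card = 7 := by decide
  rw [Finset.sum_congr rfl fun v hv => h _ (isUnit_M v hv), Finset.sum_const, card_eq] at sum_eq
  have eq_zero : ∀ x : kk, 7 • x = 0 → x = 0 := by decide
  obtain rfl := eq_zero c sum_eq
  exact mem_hitsOrLower_pairWeight_of_forall_substCoeff_eq_zero hn hf h

end ThreesOneOne

section WeightSubquotient

theorem span_monomial_eq_inf (n : ℕ) (p : (ℕ → ℕ) → Prop) :
    Submodule.span kk {f | ∃ d : Fin 4 →₀ ℕ, (∑ i, d i) = n ∧ p (wv d) ∧ f = monomial d 1} =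
      homog n ⊓ restrictSupport kk {d | p (wv d)} := by
  have generators : {f : P4 | ∃ d : Fin 4 →₀ ℕ, (∑ i, d i) = n ∧ p (wv d) ∧ f = monomial d 1} =
      (monomial · 1) '' ({d | d.degree = n} ∩ {d | p (wv d)}) := by
    ext f
    simp only [Set.mem_ofPred_eq, Set.mem_image, Set.mem_inter_iff, Finsupp.degree_eq_sum,
      and_assoc, eq_comm (a := f)]
  ext f
  rw [generators, ← restrictSupport_eq_span, mem_restrictSupport_iff, Set.subset_inter_iff, homog,
    homogeneousSubmodule_eq_finsupp_supported, Submodule.mem_inf, mem_restrictSupport_iff]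
  rfl

theorem Pw_eq_inf (n : ℕ) (w : ℕ → ℕ) :
    Pw n w = homog n ⊓ restrictSupport kk {d | wLe (wv d) w} :=
  span_monomial_eq_inf n (wLe · w)

theorem Pw_le_restrictSupport (n : ℕ) (w : ℕ → ℕ) :
    Pw n w ≤ restrictSupport kk {d | wLe (wv d) w} :=
  (Pw_eq_inf n w).trans_le inf_le_right

theorem PwLt_eq_inf (n : ℕ) (w : ℕ → ℕ) : PwLt n w = homog n ⊓ lower w :=
  span_monomial_eq_inf n (wLt · w)

theorem PwLt_le_Pw (n : ℕ) (w : ℕ → ℕ) : PwLt n w ≤ Pw n w := by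
  rw [Pw_eq_inf, PwLt_eq_inf]
  exact inf_le_inf_left _ (restrictSupport_mono kk fun _ => Or.inr)

theorem wDenom_le_hitsOrLower (n : ℕ) (w : ℕ → ℕ) : wDenom n w ≤ hitsOrLower w := by
  refine sup_le_sup (inf_le_left.trans (le_iSup hitSub n)) ?_
  rw [PwLt_eq_inf]
  exact inf_le_right

theorem mem_wDenom_iff {n : ℕ} {w : ℕ → ℕ} {f : P4} (hf : f ∈ Pw n w) :
    f ∈ wDenom n w ↔ f ∈ hitsOrLower w := by
  refine ⟨fun h => wDenom_le_hitsOrLower n w h, fun h => ?_⟩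
  obtain ⟨g, hg, l, hl, heq⟩ := Submodule.mem_sup.1 h
  have lower_part : homogeneousComponent n l ∈ PwLt n w := by
    rw [PwLt_eq_inf]
    exact ⟨homogeneousComponent_mem n l, homogeneousComponent_mem_restrictSupport hl n⟩
  have homogeneous : homogeneousComponent n g + homogeneousComponent n l = f := by
    rw [← map_add, heq]
    rw [Pw_eq_inf] at hf
    rw [homogeneousComponent_of_mem hf.1, if_pos rfl]
  have hit_part : homogeneousComponent n g ∈ Pw n w := by
    rw [eq_sub_of_add_eq homogeneous]
    exact sub_mem hf (PwLt_le_Pw n w lower_part)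
  rw [← homogeneous]
  exact Submodule.add_mem_sup ⟨homogeneousComponent_mem_hitSub hg n, hit_part⟩ lower_part

theorem QwMk_eq_zero_iff {n : ℕ} {w : ℕ → ℕ} {x : Pw n w} :
    QwMk n w x = 0 ↔ (x : P4) ∈ hitsOrLower w := by
  rw [← mem_wDenom_iff x.2]
  exact Submodule.Quotient.mk_eq_zero _

theorem mem_QwInv_iff {n : ℕ} {w : ℕ → ℕ} {G : Set (Matrix (Fin 4) (Fin 4) kk)} {c : Qw n w} :
    c ∈ QwInv n w G ↔
      ∃ x : Pw n w, (∀ M ∈ G, substM M x - (x : P4) ∈ wDenom n w) ∧ QwMk n w x = c := by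
  simp [QwInv]

theorem mem_QwSpanOf_singleton_iff {n : ℕ} {w : ℕ → ℕ} {f : P4} (hf : f ∈ Pw n w) {c : Qw n w} :
    c ∈ QwSpanOf n w {f} ↔ ∃ a : kk, a • QwMk n w ⟨f, hf⟩ = c := by
  have comap_span : (Submodule.span kk {f}).comap (Pw n w).subtype =
      Submodule.span kk {⟨f, hf⟩} := by
    rw [← Submodule.comap_map_eq_of_injective (Pw n w).injective_subtype (Submodule.span kk {_}),
      Submodule.map_span, Set.image_singleton, Submodule.subtype_apply]
  rw [QwSpanOf, comap_span, Submodule.map_span, Set.image_singleton, Submodule.mem_span_singleton]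

theorem substM_mul (M N : Matrix (Fin 4) (Fin 4) kk) (f : P4) :
    substM (M * N) f = substM N (substM M f) := by
  refine DFunLike.congr_fun (f := substM (M * N)) (g := (substM N).comp (substM M))
    (algHom_ext fun i => ?_) f
  simp only [AlgHom.comp_apply, substM_X, map_sum, map_smul, Finset.smul_sum, smul_smul,
    Matrix.mul_apply, Finset.sum_smul]
  exact Finset.sum_comm

theorem substCoeff_substM (M N : Matrix (Fin 4) (Fin 4) kk) (d : Fin 4 →₀ ℕ) (f : P4) :
    substCoeff M d (substM N f) = substCoeff (N * M) d f := by
  rw [substCoeff_apply, substCoeff_apply, substM_mul]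

theorem substCoeff_eq_coeff_of_sub_mem {w : ℕ → ℕ} {d : Fin 4 →₀ ℕ} (hd : IsTestExp w d)
    {M : Matrix (Fin 4) (Fin 4) kk} {f : P4} (h : substM M f - f ∈ hitsOrLower w) :
    substCoeff M d f = coeff d f := by
  rw [substCoeff_apply, ← sub_eq_zero, ← coeff_sub]
  exact hd.coeff_eq_zero h

end WeightSubquotient

section Invariants

theorem QwInv_pairWeight_eq_bot {s : ℕ} (hs : 3 ≤ s) (n : ℕ) :
    QwInv n (consThree^[s] pairWeight) glSet = ⊥ := by
  rw [eq_bot_iff]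
  rintro c hc
  obtain ⟨x, hx, rfl⟩ := mem_QwInv_iff.1 hc
  rw [Submodule.mem_bot, QwMk_eq_zero_iff]
  exact mem_hitsOrLower_of_forall_substCoeff_eq hs (Pw_le_restrictSupport n _ x.2) fun M hM =>
    substCoeff_eq_coeff_of_sub_mem (isTestExp_single_three.iterate s)
      (wDenom_le_hitsOrLower n _ (hx M hM))

theorem wLe_wv_of_degree_add_three_eq {N : ℕ} {d : Fin 4 →₀ ℕ} (h : d.degree + 3 = 3 * 2 ^ N) :
    wLe (wv d) (consThree^[N] 0) := by
  induction N generalizing d with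
  | zero =>
    obtain rfl : d = 0 := (Finsupp.degree_eq_zero_iff d).1 (by omega)
    exact .inl wv_zero_exp
  | succ N ih =>
    have parity : wv d 0 % 2 = d.degree % 2 := by
      rw [wv_zero, Finsupp.degree_eq_sum, ← Finset.sum_nat_mod]
    have wv_zero_le : wv d 0 ≤ 4 := by
      rw [wv_zero]
      exact (Finset.sum_le_sum fun i _ => Nat.lt_succ_iff.1 (Nat.mod_lt (d i) two_pos)).trans_eq
        (by simp)
    rw [pow_succ] at h
    rw [Function.iterate_succ_apply']
    rcases (by omega : wv d 0 < 3 ∨ wv d 0 = 3) with h0 | h0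
    · exact .inr (wLt_consThree_of_lt h0 _)
    · obtain ⟨i, d, rfl⟩ := exists_eq_upExp h0
      rw [degree_upExp] at h
      rw [wv_upExp]
      exact (ih (by omega)).imp (congrArg consThree) consThree_wLt_consThree.2

theorem mem_Pw_iff_isHomogeneous {N n : ℕ} (hn : n + 3 = 3 * 2 ^ N) {f : P4} :
    f ∈ Pw n (consThree^[N] 0) ↔ f.IsHomogeneous n := by
  rw [Pw_eq_inf]
  refine ⟨fun h => h.1, fun h => ⟨h, fun d hd => wLe_wv_of_degree_add_three_eq ?_⟩⟩
  rw [← hn, by_contra fun hne => mem_support_iff.1 hd (h.coeff_eq_zero hne)]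

theorem isHomogeneous_upWord_one {L : List (Fin 4)} {n : ℕ} (hn : n + 3 = 3 * 2 ^ L.length) :
    (upWord L 1).IsHomogeneous n := by
  induction L generalizing n with
  | nil =>
    obtain rfl : n = 0 := by simpa using hn
    exact isHomogeneous_one _ _
  | cons i L ih =>
    rw [List.length_cons, pow_succ] at hn
    obtain ⟨m, rfl⟩ : ∃ m, n = 3 + m * 2 := ⟨(n - 3) / 2, by omega⟩
    rw [upWord_cons, Module.End.mul_apply, up_apply]
    exact (isHomogeneous_omitVar i).mul ((ih (by omega)).pow 2)

theorem mem_hitsOrLower_of_mem_Pw {N n : ℕ} (hN : N ≠ 0) {f : P4}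
    (hf : f ∈ Pw n (consThree^[N] 0))
    (h : ∀ M, IsUnit M → substCoeff M ((upExp 0)^[N] 0) f = 0) :
    f ∈ hitsOrLower (consThree^[N] 0) :=
  mem_hitsOrLower_of_forall_substCoeff_eq_zero hN (Pw_le_restrictSupport n _ hf) h

section SubstCoeffOne

variable {N n : ℕ} {z : P4}

theorem substM_sub_mem_wDenom (hN : N ≠ 0) (hn : n + 3 = 3 * 2 ^ N) (hz : z.IsHomogeneous n)
    (h : ∀ M, IsUnit M → substCoeff M ((upExp 0)^[N] 0) z = 1)
    {M : Matrix (Fin 4) (Fin 4) kk} (hM : IsUnit M) :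
    substM M z - z ∈ wDenom n (consThree^[N] 0) := by
  have hdiff := (mem_Pw_iff_isHomogeneous hn).2 ((isHomogeneous_substM M hz).sub hz)
  rw [mem_wDenom_iff hdiff]
  refine mem_hitsOrLower_of_mem_Pw hN hdiff fun M' hM' => ?_
  rw [map_sub, substCoeff_substM, h _ hM', h _ (hM.mul hM'), sub_self]

theorem sub_coeff_smul_mem_hitsOrLower (hN : N ≠ 0) (hz : z ∈ Pw n (consThree^[N] 0))
    (h : ∀ M, IsUnit M → substCoeff M ((upExp 0)^[N] 0) z = 1) {f : P4}
    (hf : f ∈ Pw n (consThree^[N] 0))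
    (hinv : ∀ M, IsUnit M → substM M f - f ∈ wDenom n (consThree^[N] 0)) :
    f - coeff ((upExp 0)^[N] 0) f • z ∈ hitsOrLower (consThree^[N] 0) := by
  refine mem_hitsOrLower_of_mem_Pw hN (sub_mem hf (Submodule.smul_mem _ _ hz)) fun M hM => ?_
  rw [map_sub, map_smul, h M hM, smul_eq_mul, mul_one, sub_eq_zero]
  exact substCoeff_eq_coeff_of_sub_mem (isTestExp_zero.iterate _)
    (wDenom_le_hitsOrLower n _ (hinv M hM))

theorem QwInv_eq_QwSpanOf_singleton (hN : N ≠ 0) (hn : n + 3 = 3 * 2 ^ N)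
    (hz : z.IsHomogeneous n) (h : ∀ M, IsUnit M → substCoeff M ((upExp 0)^[N] 0) z = 1) :
    QwInv n (consThree^[N] 0) glSet = QwSpanOf n (consThree^[N] 0) {z} := by
  have hmem := (mem_Pw_iff_isHomogeneous hn).2 hz
  ext c
  rw [mem_QwSpanOf_singleton_iff hmem]
  constructor
  · intro hc
    obtain ⟨x, hx, rfl⟩ := mem_QwInv_iff.1 hc
    refine ⟨coeff ((upExp 0)^[N] 0) (x : P4), ?_⟩
    rw [← map_smul, ← sub_eq_zero, ← neg_eq_zero, neg_sub, ← map_sub, QwMk_eq_zero_iff]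
    exact sub_coeff_smul_mem_hitsOrLower hN hmem h x.2 hx
  · rintro ⟨a, rfl⟩
    have class_mem : QwMk n _ ⟨z, hmem⟩ ∈ QwInv n (consThree^[N] 0) glSet :=
      mem_QwInv_iff.2 ⟨⟨z, hmem⟩, fun M hM => substM_sub_mem_wDenom hN hn hz h hM, rfl⟩
    exact Submodule.smul_mem _ a class_mem

theorem QwSpanOf_singleton_ne_bot (hz : z ∈ Pw n (consThree^[N] 0))
    (hcoeff : coeff ((upExp 0)^[N] 0) z ≠ 0) : QwSpanOf n (consThree^[N] 0) {z} ≠ ⊥ := by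
  intro h
  have hmem := (mem_QwSpanOf_singleton_iff hz).2 ⟨1, one_smul kk _⟩
  rw [h, Submodule.mem_bot, QwMk_eq_zero_iff] at hmem
  exact hcoeff ((isTestExp_zero.iterate N).coeff_eq_zero hmem)

end SubstCoeffOne

section ZetaStar

variable {r n : ℕ}

theorem isHomogeneous_zetaStar (hn : n + 3 = 3 * 2 ^ (r + 4)) :
    (zetaStar (2 ^ (r + 4))).IsHomogeneous n := by
  rw [zetaStar_eq_sum_upWord]
  refine (homogeneousSubmodule (Fin 4) kk n).list_sum_mem fun f hf => ?_
  obtain ⟨L, hL, rfl⟩ := List.mem_map.1 hf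
  exact isHomogeneous_upWord_one (by rw [length_of_mem_zetaWords hL, hn])

theorem QwInv_eq_QwSpanOf_zetaStar (hn : n + 3 = 3 * 2 ^ (r + 4)) :
    QwInv n (consThree^[r + 4] 0) glSet =
      QwSpanOf n (consThree^[r + 4] 0) {zetaStar (2 ^ (r + 4))} :=
  QwInv_eq_QwSpanOf_singleton (Nat.succ_ne_zero _) hn (isHomogeneous_zetaStar hn)
    fun _ hM => substCoeff_zetaStar hM r

theorem QwSpanOf_zetaStar_ne_bot (hn : n + 3 = 3 * 2 ^ (r + 4)) :
    QwSpanOf n (consThree^[r + 4] 0) {zetaStar (2 ^ (r + 4))} ≠ ⊥ := by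
  refine QwSpanOf_singleton_ne_bot ((mem_Pw_iff_isHomogeneous hn).2 (isHomogeneous_zetaStar hn)) ?_
  have coeff_eq_one := substCoeff_zetaStar isUnit_one r
  rw [substCoeff_apply, substM_one] at coeff_eq_one
  exact coeff_eq_one ▸ one_ne_zero

end ZetaStar

end Invariants

end HitProblem

/-- For `s ≥ 3`, `n = 6·2^s - 3`, `e = 2^{s+1}`, and the weight vectors
`ω₁ = (3,…,3,1,1)` (`s` threes) and `ω₂ = (3,…,3)` (`s+1` threes):
(i) the `GL_4(F_2)`-invariants of `(Q_n)^{ω₁}` are trivial;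
(ii) the `GL_4(F_2)`-invariants of `(Q_n)^{ω₂}` are one-dimensional, spanned by the class
of `ζ*`. -/
theorem statement_13 (s n e : ℕ) (hs : 3 ≤ s) (hn : n = 6 * 2 ^ s - 3)
    (he : e = 2 ^ (s + 1)) :
    QwInv n (fun j => if j < s then 3 else if j < s + 2 then 1 else 0) glSet = ⊥ ∧
    (QwInv n (fun j => if j < s + 1 then 3 else 0) glSet =
        QwSpanOf n (fun j => if j < s + 1 then 3 else 0) {zetaStar e} ∧
      QwSpanOf n (fun j => if j < s + 1 then 3 else 0) {zetaStar e} ≠ ⊥) := by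
  have weight_one : (fun j => if j < s then 3 else if j < s + 2 then 1 else 0) =
      HitProblem.consThree^[s] HitProblem.pairWeight := by
    funext j
    rw [HitProblem.consThree_iterate_apply, HitProblem.pairWeight]
    grind
  have weight_two : (fun j => if j < s + 1 then 3 else 0) = HitProblem.consThree^[s + 1] 0 := by
    funext j
    rw [HitProblem.consThree_iterate_apply, Pi.zero_apply]
  have degree : n + 3 = 3 * 2 ^ (s + 1) := by
    have := Nat.one_le_two_pow (n := s)
    rw [pow_succ]
    omega
  obtain ⟨r, rfl⟩ : ∃ r, s = r + 3 := ⟨s - 3, by omega⟩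
  rw [weight_one, weight_two, he]
  exact ⟨HitProblem.QwInv_pairWeight_eq_bot hs n, HitProblem.QwInv_eq_QwSpanOf_zetaStar degree,
    HitProblem.QwSpanOf_zetaStar_ne_bot degree⟩

end
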